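/- (Evans–Krylov theorem) Let F : Sym(n) → ℝ be concave, satisfy F(0) = 0, and be uniformly elliptic in the sense that λ‖N‖ ≤ F(M + N) − F(M) ≤ Λ‖N‖ for all M ∈ Sym(n) and all positive semidefinite N ∈ Sym(n). There exist α ∈ (0,1) and C > 0 depending only on n, λ, Λ such that: if u : B₁ → ℝ is continuously differentiable with Lipschitz gradient (u ∈ C^{1,1}(B₁)) and F(D²u(x)) = 0 for almost every x ∈ B₁, then the Hessian D²u has an α-Hölder continuous representative on B_{1/2} and ‖u‖_{L^∞(B_{1/2})} + ‖Du‖_{L^∞(B_{1/2})} + ‖D²u‖_{L^∞(B_{1/2})} + sup_{x≠y ∈ B_{1/2}} ‖D²u(x) − D²u(y)‖/|x−y|^α ≤ C ‖u‖_{L^∞(B₁)}. -/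

import Mathlib

open MeasureTheory Metric Set Filter
open scoped ENNReal NNReal Topology

noncomputable section

/-- Euclidean space `ℝⁿ`. -/
abbrev En (n : ℕ) := EuclideanSpace ℝ (Fin n)

/-- Real `n × n` matrices. -/
abbrev Mat (n : ℕ) := Matrix (Fin n) (Fin n) ℝ

/-- The `L²` operator norm of a matrix. -/
def opNorm {n : ℕ} (M : Mat n) : ℝ := ‖Matrix.toEuclideanCLM (𝕜 := ℝ) M‖

/-- The second partial derivative `∂_{ij} u (x)`. -/
def pd2 {n : ℕ} (u : En n → ℝ) (i j : Fin n) (x : En n) : ℝ :=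
  fderiv ℝ (fun y => fderiv ℝ u y (EuclideanSpace.single i 1)) x (EuclideanSpace.single j 1)

/-- The Hessian matrix `D²u(x)`. -/
def hessian {n : ℕ} (u : En n → ℝ) (x : En n) : Mat n :=
  Matrix.of fun i j => pd2 u i j x

/-- `F` is uniformly elliptic on symmetric matrices:
`λ‖N‖ ≤ F(M + N) − F(M) ≤ Λ‖N‖` for all symmetric `M` and positive semidefinite `N`. -/
def UnifEllipticOperator {n : ℕ} (lam Lam : ℝ) (F : Mat n → ℝ) : Prop :=
  ∀ M N : Mat n, M.IsSymm → N.IsSymm → N.PosSemidef →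
    lam * opNorm N ≤ F (M + N) - F M ∧ F (M + N) - F M ≤ Lam * opNorm N

/-- `F` is concave on the space of symmetric matrices. -/
def ConcaveOnSym {n : ℕ} (F : Mat n → ℝ) : Prop :=
  ∀ M N : Mat n, M.IsSymm → N.IsSymm → ∀ t : ℝ, t ∈ Set.Icc (0 : ℝ) 1 →
    t * F M + (1 - t) * F N ≤ F (t • M + (1 - t) • N)

/-- Second derivative as a bilinear form. -/
abbrev D2 {n : ℕ} (u : En n → ℝ) (x : En n) : En n →L[ℝ] En n →L[ℝ] ℝ :=
  fderiv ℝ (fderiv ℝ u) x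

/-- Pointwise subsolution condition on a bilinear form. -/
def SubK {n : ℕ} (K : ℝ) (X : En n →L[ℝ] En n →L[ℝ] ℝ) : Prop :=
  ∀ c : ℝ, 0 ≤ c → (∀ e, X e e ≤ c * ‖e‖ ^ 2) → ∀ e, -(K * c) * ‖e‖ ^ 2 ≤ X e e

theorem taylor_bound {n : ℕ} {u : En n → ℝ} {x : En n} {s ε : ℝ} (hε : 0 ≤ ε)
    (B : En n →L[ℝ] En n →L[ℝ] ℝ)
    (hu : ∀ y ∈ ball x s, DifferentiableAt ℝ u y)
    (hB : ∀ y ∈ ball x s, ‖fderiv ℝ u y - fderiv ℝ u x - B (y - x)‖ ≤ ε * ‖y - x‖)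
    {h : En n} (hh : ‖h‖ < s) :
    |u (x + h) - u x - fderiv ℝ u x h - B h h / 2| ≤ ε * ‖h‖ ^ 2 := by
  have hmem : ∀ t ∈ Icc (0:ℝ) 1, x + t • h ∈ ball x s := by
    intro t ht
    rw [mem_ball, dist_eq_norm, add_sub_cancel_left, norm_smul, Real.norm_eq_abs, abs_of_nonneg ht.1]
    nlinarith [norm_nonneg h, ht.2]
  have key := norm_image_sub_le_of_norm_deriv_le_segment_01'
    (f := fun t : ℝ => u (x + t • h) - t * fderiv ℝ u x h - t ^ 2 * (B h h / 2))
    (f' := fun t : ℝ => (fderiv ℝ u (x + t • h) - fderiv ℝ u x - B (x + t • h - x)) h)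
    (C := ε * ‖h‖ ^ 2) ?_ ?_
  · simp only [one_smul, one_mul, one_pow, zero_smul, add_zero, zero_mul, Real.norm_eq_abs] at key
    convert key using 2
    ring
  · intro t ht
    apply HasDerivAt.hasDerivWithinAt
    have h1 : HasDerivAt (fun t : ℝ => x + t • h) h t := by
      simpa using ((hasDerivAt_id t).smul_const h).const_add x
    have h2 := (hu _ (hmem t ht)).hasFDerivAt.comp_hasDerivAt t h1
    have h3 := (h2.sub ((hasDerivAt_id t).mul_const (fderiv ℝ u x h))).sub
      ((hasDerivAt_pow 2 t).mul_const (B h h / 2))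
    refine h3.congr_deriv ?_
    simp
    ring
  · intro t ht
    have ht' : t ∈ Icc (0:ℝ) 1 := ⟨ht.1, ht.2.le⟩
    refine (ContinuousLinearMap.le_opNorm _ _).trans ?_
    have := hB _ (hmem t ht')
    rw [add_sub_cancel_left] at this ⊢
    rw [norm_smul, Real.norm_eq_abs, abs_of_nonneg ht.1] at this
    have h4 : ε * (t * ‖h‖) ≤ ε * ‖h‖ := by
      apply mul_le_mul_of_nonneg_left _ hε
      nlinarith [norm_nonneg h, ht.2]
    nlinarith [norm_nonneg h, mul_le_mul_of_nonneg_right (this.trans h4) (norm_nonneg h)]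

/-- Second order Taylor expansion at a point where the gradient is differentiable. -/
theorem taylor2 {n : ℕ} {u : En n → ℝ} {x : En n}
    (hu : ∀ᶠ y in 𝓝 x, DifferentiableAt ℝ u y)
    (hd : DifferentiableAt ℝ (fderiv ℝ u) x) {ε : ℝ} (hε : 0 < ε) :
    ∃ s > 0, ∀ h : En n, ‖h‖ < s →
      |u (x + h) - u x - fderiv ℝ u x h - D2 u x h h / 2| ≤ ε * ‖h‖ ^ 2 := by
  have h1 := hd.hasFDerivAt.isLittleO.def hε
  obtain ⟨s, hs, hsub⟩ := Metric.eventually_nhds_iff_ball.1 (hu.and h1)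
  exact ⟨s, hs, fun h hh => taylor_bound hε.le (D2 u x) (fun y hy => (hsub y hy).1)
    (fun y hy => (hsub y hy).2) hh⟩

theorem D2_symm {n : ℕ} {u : En n → ℝ} {x : En n}
    (hu : ∀ᶠ y in 𝓝 x, DifferentiableAt ℝ u y)
    (hd : DifferentiableAt ℝ (fderiv ℝ u) x) (a b : En n) : D2 u x a b = D2 u x b a :=
  second_derivative_symmetric_of_eventually (hu.mono fun _ hy => hy.hasFDerivAt) hd.hasFDerivAt a b

theorem bilin_norm_le {n : ℕ} {X : En n →L[ℝ] En n →L[ℝ] ℝ} {c : ℝ} (hc : 0 ≤ c)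
    (hs : ∀ a b, X a b = X b a) (h1 : ∀ e, |X e e| ≤ c * ‖e‖ ^ 2) : ‖X‖ ≤ c := by
  -- polarization
  have key : ∀ a b : En n, ‖a‖ = 1 → ‖b‖ = 1 → X a b ≤ c := by
    intro a b ha hb
    have h2 := (abs_le.1 (h1 (a + b))).2
    have h3 := (abs_le.1 (h1 (a - b))).1
    have h4 := parallelogram_law_with_norm ℝ a b
    simp only [map_add, map_sub, add_apply, sub_apply] at h2 h3
    rw [hs b a] at h2 h3
    rw [ha, hb] at h4
    have : c * ‖a + b‖ ^ 2 + c * ‖a - b‖ ^ 2 = 4 * c := by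
      linear_combination c * h4
    linarith
  have unit : ∀ a : En n, a ≠ 0 → ‖(‖a‖⁻¹ • a)‖ = 1 := fun a ha => by
    rw [norm_smul, norm_inv, norm_norm, inv_mul_cancel₀ (norm_ne_zero_iff.2 ha)]
  refine ContinuousLinearMap.opNorm_le_bound _ hc fun a => ContinuousLinearMap.opNorm_le_bound _
    (by positivity) fun b => ?_
  by_cases ha : a = 0
  · simp [ha]
  by_cases hb : b = 0
  · simp [hb]
  have k1 := key _ _ (unit a ha) (unit b hb)
  have k2 := key (-(‖a‖⁻¹ • a)) _ (by rw [norm_neg]; exact unit a ha) (unit b hb)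
  simp only [map_neg, neg_apply, map_smul, smul_apply,
    smul_eq_mul] at k1 k2
  have pa := norm_pos_iff.2 ha
  have pb := norm_pos_iff.2 hb
  have e1 : X a b = ‖a‖ * ‖b‖ * (‖a‖⁻¹ * (‖b‖⁻¹ * X a b)) := by field_simp
  set q := ‖a‖⁻¹ * (‖b‖⁻¹ * X a b) with hq
  have e2 : |q| ≤ c := abs_le.2 ⟨by linarith, by linarith⟩
  rw [Real.norm_eq_abs, e1, abs_mul, abs_of_pos (mul_pos pa pb)]
  nlinarith [mul_pos pa pb]

/-- At a minimum of `g` minus a linear function, `D²g ≥ 0` and `Dg` is the linear function. -/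
theorem min_D2 {n : ℕ} {g : En n → ℝ} {x p : En n} {U : Set (En n)} (hU : IsOpen U) (hx : x ∈ U)
    (hg : ∀ y ∈ U, DifferentiableAt ℝ g y) 
    (hmin : ∀ y ∈ U, g x - inner ℝ p x ≤ g y - inner ℝ p y) :
    fderiv ℝ g x = innerSL ℝ p ∧ (DifferentiableAt ℝ (fderiv ℝ g) x → ∀ e, 0 ≤ D2 g x e e) := by
  have hUx : U ∈ 𝓝 x := hU.mem_nhds hx
  have hfd : fderiv ℝ g x = innerSL ℝ p := by
    have hl : IsLocalMin (fun y => g y - innerSL ℝ p y) x := by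
      filter_upwards [hUx] with y hy
      simpa using hmin y hy
    have := hl.fderiv_eq_zero
    rw [fderiv_fun_sub (hg x hx) (ContinuousLinearMap.differentiableAt _),
      ContinuousLinearMap.fderiv] at this
    exact sub_eq_zero.1 this
  refine ⟨hfd, fun hd e => ?_⟩
  by_contra hneg
  push Not at hneg
  have he : e ≠ 0 := by rintro rfl; simp at hneg
  have pe := norm_pos_iff.2 he
  set q := -(D2 g x e e) with hq
  have hqp : 0 < q := by linarith
  obtain ⟨s, hs, hT⟩ := taylor2 (by filter_upwards [hUx] with y hy using hg y hy) hd (ε := q / (4 * ‖e‖ ^ 2)) (by positivity)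
  obtain ⟨r, hr, hrU⟩ := Metric.mem_nhds_iff.1 hUx
  set t := min s r / (2 * ‖e‖) with ht
  have htp : 0 < t := by positivity
  have hn : ‖t • e‖ = min s r / 2 := by
    rw [norm_smul, Real.norm_eq_abs, abs_of_pos htp, ht]; field_simp
  have hmn : 0 < min s r := lt_min hs hr
  have h1 := hT (t • e) (by rw [hn]; linarith [min_le_left s r])
  have h2 := hmin (x + t • e) (hrU (by
    rw [mem_ball, dist_eq_norm, add_sub_cancel_left, hn]; linarith [min_le_right s r]))
  rw [hfd] at h1
  have h3 := (abs_le.1 h1).2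
  have h4 : ‖t • e‖ ^ 2 = t ^ 2 * ‖e‖ ^ 2 := by
    rw [norm_smul, mul_pow, Real.norm_eq_abs, sq_abs]
  rw [h4] at h3
  have h5 : q / (4 * ‖e‖ ^ 2) * (t ^ 2 * ‖e‖ ^ 2) = q * t ^ 2 / 4 := by field_simp
  rw [h5] at h3
  simp only [innerSL_apply_apply, map_smul, smul_apply, smul_eq_mul, inner_add_right,
    inner_smul_right] at h2 h3
  have h6 : t * (t * D2 g x e e) = - (q * t ^ 2) := by rw [hq]; ring
  rw [h6] at h3
  have : 0 < q * t ^ 2 := by positivity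
  linarith

theorem lip_null_image {n : ℕ} {f : En n → En n} {s : Set (En n)} {L : ℝ≥0}
    (hf : LipschitzOnWith L f s) (hs : volume s = 0) : volume (f '' s) = 0 := by
  have h1 := hf.hausdorffMeasure_image_le (d := (Module.finrank ℝ (En n) : ℝ)) (by positivity)
  have hac1 : (μH[(Module.finrank ℝ (En n) : ℝ)] : Measure (En n)) ≪ volume :=
    Measure.absolutelyContinuous_isAddHaarMeasure _ _
  have hac2 : volume ≪ (μH[(Module.finrank ℝ (En n) : ℝ)] : Measure (En n)) :=
    Measure.absolutelyContinuous_isAddHaarMeasure _ _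
  apply hac2
  rw [hac1 hs, mul_zero] at h1
  exact le_antisymm h1 bot_le

theorem abs_det_le {n : ℕ} (T : En n →L[ℝ] En n) : |T.det| ≤ ‖T‖ ^ n := by
  have h1 := Measure.addHaar_image_linearMap volume (T : En n →ₗ[ℝ] En n) (closedBall 0 1)
  have h2 : (T : En n →ₗ[ℝ] En n) '' (closedBall 0 1) ⊆ closedBall 0 ‖T‖ := by
    rintro _ ⟨x, hx, rfl⟩
    simp only [mem_closedBall, dist_zero_right] at hx ⊢
    calc ‖T x‖ ≤ ‖T‖ * ‖x‖ := T.le_opNorm x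
      _ ≤ ‖T‖ * 1 := by gcongr
      _ = ‖T‖ := mul_one _
  have h3 := measure_mono (μ := volume) h2
  rw [h1, Measure.addHaar_closedBall' _ _ (norm_nonneg _), finrank_euclideanSpace_fin] at h3
  have hpos : volume (closedBall (0 : En n) 1) ≠ 0 := (measure_closedBall_pos _ _ one_pos).ne'
  have hfin : volume (closedBall (0 : En n) 1) ≠ ∞ := measure_closedBall_lt_top.ne
  have h4 := (ENNReal.mul_le_mul_iff_left hpos hfin).1 h3
  rwa [ENNReal.ofReal_le_ofReal_iff (by positivity)] at h4

theorem exists_J (n : ℕ) : ∃ J : (En n →L[ℝ] ℝ) →L[ℝ] En n, (∀ φ, ‖J φ‖ = ‖φ‖) ∧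
    ∀ p : En n, J (innerSL ℝ p) = p := by
  let J0 := (InnerProductSpace.toDual ℝ (En n)).symm
  refine ⟨LinearMap.mkContinuous
    { toFun := fun φ => J0 φ
      map_add' := fun a b => map_add J0 a b
      map_smul' := fun r a => by simp } 1 (fun φ => ?_), fun φ => ?_, fun p => ?_⟩
  · rw [one_mul]; exact (J0.norm_map φ).le
  · exact J0.norm_map φ
  · exact (InnerProductSpace.toDual ℝ (En n)).symm_apply_apply p

theorem contact {n : ℕ} {g : En n → ℝ} {U E0 : Set (En n)} {δ C : ℝ} {L : ℝ≥0}
    (hU : IsOpen U) (hC : 0 ≤ C)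
    (hg : ∀ y ∈ U, DifferentiableAt ℝ g y) (hL : LipschitzOnWith L (fderiv ℝ g) U)
    (h1 : ∀ p ∈ ball (0 : En n) δ, ∃ x ∈ U, ∀ y ∈ U, g x - inner ℝ p x ≤ g y - inner ℝ p y)
    (h2 : ∀ᵐ x, x ∈ U → DifferentiableAt ℝ (fderiv ℝ g) x ∧
      ∀ p ∈ ball (0 : En n) δ, (∀ y ∈ U, g x - inner ℝ p x ≤ g y - inner ℝ p y) →
        (∀ e, 0 ≤ D2 g x e e) → x ∈ E0 ∧ ∀ e, D2 g x e e ≤ C * ‖e‖ ^ 2) :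
    volume (ball (0 : En n) δ) ≤ ENNReal.ofReal (C ^ n) * volume E0 := by
  obtain ⟨J, hJn, hJp⟩ := exists_J n
  set f : En n → En n := fun x => J (fderiv ℝ g x) with hf
  set Γ : Set (En n) := {x | x ∈ U ∧ ∃ p ∈ ball (0 : En n) δ, ∀ y ∈ U,
    g x - inner ℝ p x ≤ g y - inner ℝ p y} with hΓ
  set Gd : Set (En n) := {x | x ∈ U → DifferentiableAt ℝ (fderiv ℝ g) x ∧
      ∀ p ∈ ball (0 : En n) δ, (∀ y ∈ U, g x - inner ℝ p x ≤ g y - inner ℝ p y) →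
        (∀ e, 0 ≤ D2 g x e e) → x ∈ E0 ∧ ∀ e, D2 g x e e ≤ C * ‖e‖ ^ 2} with hGd
  have hcov : ball (0 : En n) δ ⊆ f '' (Γ ∩ Gd) ∪ f '' (Γ ∩ Gdᶜ) := by
    intro p hp
    obtain ⟨x, hx, hmin⟩ := h1 p hp
    have hfx : f x = p := by
      have := (min_D2 hU hx hg hmin).1
      simp only [hf, this, hJp]
    rw [← image_union, inter_union_compl]
    exact ⟨x, ⟨hx, p, hp, hmin⟩, hfx⟩
  have hLf : LipschitzOnWith L f U := by
    apply LipschitzOnWith.of_dist_le_mul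
    intro x hx y hy
    rw [dist_eq_norm]
    simp only [hf]
    rw [← map_sub, hJn, ← dist_eq_norm]
    exact hL.dist_le_mul x hx y hy
  have hnull : volume (f '' (Γ ∩ Gdᶜ)) = 0 := by
    apply lip_null_image (hLf.mono fun x hx => hx.1.1)
    apply measure_mono_null inter_subset_right
    exact h2
  -- measurable hull
  set S : Set (En n) := toMeasurable volume (Γ ∩ Gd) ∩
    ({x | DifferentiableAt ℝ (fderiv ℝ g) x} ∩ {x | ‖D2 g x‖ ≤ C}) with hS
  have hprop : ∀ x ∈ Γ ∩ Gd, x ∈ E0 ∧ DifferentiableAt ℝ (fderiv ℝ g) x ∧ ‖D2 g x‖ ≤ C := by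
    rintro x ⟨⟨hxU, p, hp, hmin⟩, hgd⟩
    obtain ⟨hd, hq⟩ := hgd hxU
    have hpos := (min_D2 hU hxU hg hmin).2 hd
    obtain ⟨hE, hub⟩ := hq p hp hmin hpos
    refine ⟨hE, hd, bilin_norm_le hC (D2_symm ?_ hd) ?_⟩
    · filter_upwards [hU.mem_nhds hxU] with y hy using hg y hy
    · intro e
      rw [abs_of_nonneg (hpos e)]
      exact hub e
  have hsub : Γ ∩ Gd ⊆ S := fun x hx => ⟨subset_toMeasurable _ _ hx, (hprop x hx).2.1, (hprop x hx).2.2⟩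
  have hSm : MeasurableSet S := by
    refine (measurableSet_toMeasurable _ _).inter ((measurableSet_of_differentiableAt ℝ _).inter ?_)
    exact measurableSet_le (measurable_fderiv ℝ (fderiv ℝ g)).norm measurable_const
  set f' : En n → (En n →L[ℝ] En n) := fun x =>
    J.comp (D2 g x) with hf'
  have hder : ∀ x ∈ S, HasFDerivWithinAt f (f' x) S x := by
    intro x hx
    apply HasFDerivAt.hasFDerivWithinAt
    exact J.hasFDerivAt.comp x hx.2.1.hasFDerivAt
  have hnorm : ∀ x ∈ S, ENNReal.ofReal |(f' x).det| ≤ ENNReal.ofReal (C ^ n) := by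
    intro x hx
    apply ENNReal.ofReal_le_ofReal
    refine (abs_det_le _).trans ?_
    gcongr
    refine le_trans ?_ hx.2.2
    refine ContinuousLinearMap.opNorm_le_bound (f' x) (norm_nonneg (D2 g x)) fun a => ?_
    have : ‖f' x a‖ = ‖D2 g x a‖ := hJn _
    rw [this]
    exact (D2 g x).le_opNorm a
  calc volume (ball (0 : En n) δ) ≤ volume (f '' (Γ ∩ Gd) ∪ f '' (Γ ∩ Gdᶜ)) := measure_mono hcov
    _ ≤ volume (f '' (Γ ∩ Gd)) + volume (f '' (Γ ∩ Gdᶜ)) := measure_union_le _ _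
    _ ≤ volume (f '' S) := by rw [hnull, add_zero]; exact measure_mono (image_mono hsub)
    _ ≤ ∫⁻ x in S, ENNReal.ofReal |(f' x).det| := addHaar_image_le_lintegral_abs_det_fderiv volume hSm hder
    _ ≤ ∫⁻ x in S, ENNReal.ofReal (C ^ n) := setLIntegral_mono measurable_const hnorm
    _ = ENNReal.ofReal (C ^ n) * volume S := by simp
    _ ≤ ENNReal.ofReal (C ^ n) * volume E0 := by
        refine mul_le_mul_right ?_ _
        calc volume S ≤ volume (toMeasurable volume (Γ ∩ Gd)) := measure_mono inter_subset_left
          _ = volume (Γ ∩ Gd) := measure_toMeasurable _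
          _ ≤ volume E0 := measure_mono fun x hx => (hprop x hx).1

/-- `w` is a `C^{1,1}` strong subsolution on `U`. -/
structure IsSub {n : ℕ} (K : ℝ) (w : En n → ℝ) (U : Set (En n)) : Prop where
  diff : ∀ y ∈ U, DifferentiableAt ℝ w y
  lip : ∃ L : ℝ≥0, LipschitzOnWith L (fderiv ℝ w) U
  ae : ∀ᵐ x, x ∈ U → DifferentiableAt ℝ (fderiv ℝ w) x ∧ SubK K (D2 w x)

theorem IsSub.mono {n : ℕ} {K : ℝ} {w : En n → ℝ} {U V : Set (En n)} (h : IsSub K w U)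
    (hV : V ⊆ U) : IsSub K w V :=
  ⟨fun y hy => h.diff y (hV hy), h.lip.imp fun _ hL => hL.mono hV,
    h.ae.mono fun _ hx hxV => hx (hV hxV)⟩

theorem C2_lip {n : ℕ} {φ : En n → ℝ} (hφ : ContDiff ℝ 2 φ) (R : ℝ) :
    ∃ L : ℝ≥0, LipschitzOnWith L (fderiv ℝ φ) (ball 0 R) := by
  have h1 : ContDiff ℝ 1 (fderiv ℝ φ) := hφ.fderiv_right (by norm_num)
  have h2 : Continuous (fderiv ℝ (fderiv ℝ φ)) := h1.continuous_fderiv (by norm_num)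
  have h3 : Continuous (fun x => ‖fderiv ℝ (fderiv ℝ φ) x‖) :=
    (continuous_norm (E := En n →L[ℝ] En n →L[ℝ] ℝ)).comp h2
  obtain ⟨M, hM'⟩ := (isCompact_closedBall (0 : En n) R).bddAbove_image
    (f := fun x => ‖fderiv ℝ (fderiv ℝ φ) x‖) h3.continuousOn
  have hM : ∀ x ∈ closedBall (0 : En n) R, ‖fderiv ℝ (fderiv ℝ φ) x‖ ≤ M :=
    fun x hx => hM' ⟨x, hx, rfl⟩
  refine ⟨M.toNNReal, (convex_ball 0 R).lipschitzOnWith_of_nnnorm_fderiv_le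
    (fun x _ => (h1.differentiable (by norm_num)) x) fun x hx => ?_⟩
  have := hM x (ball_subset_closedBall hx)
  rw [← NNReal.coe_le_coe, coe_nnnorm]
  exact this.trans (Real.le_coe_toNNReal M)

theorem contact2 {n : ℕ} {K : ℝ} (hK : 0 ≤ K) {w φ : En n → ℝ} {R R' δ Z : ℝ} (hR : R < R')
    (hw : IsSub K w (ball 0 R')) (hφ : ContDiff ℝ 2 φ) (hZ0 : 0 ≤ Z)
    (hZ : ∀ x ∈ ball (0 : En n) R, ∀ e, D2 φ x e e ≤ Z * ‖e‖ ^ 2)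
    {x0 : En n} (hx0 : x0 ∈ ball (0 : En n) R)
    (hb : ∀ p ∈ ball (0 : En n) δ, ∀ x : En n, ‖x‖ = R →
      φ x0 - w x0 - inner ℝ p x0 < φ x - w x - inner ℝ p x)
    {E0 : Set (En n)}
    (hE : ∀ x ∈ ball (0 : En n) R, ∀ p ∈ ball (0 : En n) δ,
      φ x - w x - inner ℝ p x ≤ φ x0 - w x0 - inner ℝ p x0 →
      SubK K (D2 w x) → (∀ e, D2 w x e e ≤ D2 φ x e e) → x ∈ E0) :
    volume (ball (0 : En n) δ) ≤ ENNReal.ofReal (((K + 1) * Z) ^ n) * volume E0 := by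
  have hsub : ball (0 : En n) R ⊆ ball 0 R' := ball_subset_ball hR.le
  have hφd : ∀ x, DifferentiableAt ℝ φ x := fun x => hφ.differentiable (by norm_num) x
  have hφd2 : ∀ x, DifferentiableAt ℝ (fderiv ℝ φ) x := fun x =>
    (hφ.fderiv_right (m := 1) (by norm_num)).differentiable (by norm_num) x
  have hfd : ∀ y ∈ ball (0 : En n) R', fderiv ℝ (fun x => φ x - w x) y = fderiv ℝ φ y - fderiv ℝ w y :=
    fun y hy => fderiv_fun_sub (hφd y) (hw.diff y hy)
  have hD2 : ∀ y ∈ ball (0 : En n) R', DifferentiableAt ℝ (fderiv ℝ w) y →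
      DifferentiableAt ℝ (fderiv ℝ (fun x => φ x - w x)) y ∧
      D2 (fun x => φ x - w x) y = D2 φ y - D2 w y := by
    intro y hy hd
    have hev : fderiv ℝ (fun x => φ x - w x) =ᶠ[𝓝 y] fun z => fderiv ℝ φ z - fderiv ℝ w z := by
      filter_upwards [isOpen_ball.mem_nhds hy] with z hz using hfd z hz
    refine ⟨(hev.differentiableAt_iff).2 ((hφd2 y).fun_sub hd), ?_⟩
    rw [D2, hev.fderiv_eq, fderiv_fun_sub (hφd2 y) hd]
  obtain ⟨L1, hL1⟩ := C2_lip hφ R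
  obtain ⟨L2, hL2⟩ := hw.lip
  refine contact (g := fun x => φ x - w x) (U := ball 0 R) (L := L1 + L2) isOpen_ball
    (by positivity) (fun y hy => (hφd y).fun_sub (hw.diff y (hsub hy))) ?_ ?_ ?_
  · apply LipschitzOnWith.of_dist_le_mul
    intro x hx y hy
    rw [hfd x (hsub hx), hfd y (hsub hy)]
    refine (dist_sub_sub_le _ _ _ _).trans ?_
    have a1 := hL1.dist_le_mul x hx y hy
    have a2 := hL2.dist_le_mul x (hsub hx) y (hsub hy)
    push_cast
    linarith
  · intro p hp
    have hcont : ContinuousOn (fun x => φ x - w x - inner ℝ p x) (closedBall (0 : En n) R) := by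
      have hc1 : ContinuousOn w (closedBall 0 R) := fun x hx =>
        (hw.diff x (closedBall_subset_ball hR hx)).continuousAt.continuousWithinAt
      have hc2 : ContinuousOn φ (closedBall 0 R) := hφ.continuous.continuousOn
      exact (hc2.sub hc1).sub (by fun_prop)
    obtain ⟨x, hx, hmin⟩ := (isCompact_closedBall (0 : En n) R).exists_isMinOn
      ⟨x0, ball_subset_closedBall hx0⟩ hcont
    have hxb : x ∈ ball (0 : En n) R := by
      by_contra hnot
      have hxR : ‖x‖ = R := by
        simp only [mem_closedBall, mem_ball, dist_zero_right, not_lt] at hx hnot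
        exact le_antisymm hx hnot
      have h1 := hb p hp x hxR
      have h2 : φ x - w x - inner ℝ p x ≤ φ x0 - w x0 - inner ℝ p x0 :=
        hmin (ball_subset_closedBall hx0)
      linarith
    exact ⟨x, hxb, fun y hy => hmin (ball_subset_closedBall hy)⟩
  · filter_upwards [hw.ae] with x hx hxU
    obtain ⟨hd, hS⟩ := hx (hsub hxU)
    obtain ⟨hd', heq⟩ := hD2 x (hsub hxU) hd
    refine ⟨hd', fun p hp hmin hpos => ?_⟩
    have hle : ∀ e, D2 w x e e ≤ D2 φ x e e := by
      intro e
      have := hpos e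
      rw [heq] at this
      simpa using this
    refine ⟨hE x hxU p hp (hmin x0 hx0) hS hle, fun e => ?_⟩
    have h3 := hS Z hZ0 (fun e => (hle e).trans (hZ x hxU e)) e
    have h4 := hZ x hxU e
    rw [heq]
    simp only [sub_apply]
    linarith

theorem fderiv_normsq {n : ℕ} (a : ℝ) (x : En n) :
    HasFDerivAt (fun x : En n => a * ‖x‖ ^ 2) ((2 * a) • innerSL ℝ x) x := by
  have := ((hasStrictFDerivAt_norm_sq x).hasFDerivAt).const_mul a
  refine this.congr_fderiv ?_
  ext y
  simp
  ring

theorem D2_normsq {n : ℕ} (a : ℝ) (x e : En n) :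
    D2 (fun x : En n => a * ‖x‖ ^ 2) x e e = 2 * a * ‖e‖ ^ 2 := by
  have h1 : fderiv ℝ (fun x : En n => a * ‖x‖ ^ 2) = fun x => ((2 * a) • innerSL ℝ (E := En n)) x := by
    ext1 x
    exact (fderiv_normsq a x).fderiv
  rw [D2, h1, ContinuousLinearMap.fderiv]
  have : (innerSL ℝ e) e = ‖e‖ ^ 2 := by
    rw [innerSL_apply_apply, real_inner_self_eq_norm_sq]
  simp [this]

/-- Local maximum principle at unit scale. -/
theorem lmp_unit {n : ℕ} {K c : ℝ} (hK : 0 ≤ K) (hc : 0 < c) (hc1 : c ≤ 1) {w : En n → ℝ}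
    (hw : IsSub K w (ball 0 1)) (hle : ∀ x ∈ ball (0 : En n) 1, w x ≤ 1) (h0 : 0 ≤ w 0) :
    ENNReal.ofReal ((c / (8 * (K + 1))) ^ n) * volume (ball (0 : En n) 1) ≤
      volume {x : En n | x ∈ ball 0 1 ∧ -c < w x} := by
  have key := contact2 (n := n) hK (w := w) (φ := fun x => 32 * ‖x‖ ^ 2) (R := 1/2) (R' := 1)
    (δ := 8 * c) (Z := 64) (by norm_num) hw (contDiff_const.mul (contDiff_norm_sq ℝ)) (by norm_num)
    (fun x _ e => by rw [D2_normsq]; norm_num) (x0 := 0) (by simp) ?_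
    (E0 := {x : En n | x ∈ ball 0 1 ∧ -c < w x}) ?_
  · have e1 : ball (0 : En n) (8 * c) = ball (0 : En n) ((8 * c) * 1) := by rw [mul_one]
    rw [e1, Measure.addHaar_ball_mul_of_pos _ _ (by positivity), finrank_euclideanSpace_fin] at key
    have e2 : (c / (8 * (K + 1))) ^ n = (((K + 1) * 64) ^ n)⁻¹ * (8 * c) ^ n := by
      rw [← inv_pow, ← mul_pow]
      congr 1
      field_simp
      norm_num
    have hp : 0 < ((K + 1) * 64) ^ n := by positivity
    rw [e2, ENNReal.ofReal_mul (by positivity), mul_assoc]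
    calc _ ≤ ENNReal.ofReal (((K + 1) * 64) ^ n)⁻¹ * (ENNReal.ofReal (((K + 1) * 64) ^ n) *
          volume {x : En n | x ∈ ball 0 1 ∧ -c < w x}) := by gcongr
      _ = _ := by
        rw [← mul_assoc, ← ENNReal.ofReal_mul (by positivity), inv_mul_cancel₀ hp.ne']
        simp
  · intro p hp x hx
    have h1 : |inner ℝ p x| ≤ ‖p‖ * ‖x‖ := abs_real_inner_le_norm p x
    have h2 : w x ≤ 1 := hle x (by simp [hx]; norm_num)
    simp only [mem_ball, dist_zero_right] at hp
    rw [hx] at h1 ⊢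
    have h3 := (abs_le.1 h1).2
    simp only [norm_zero, inner_zero_right]
    linarith
  · intro x hx p hp hle2 _ _
    have hx1 : x ∈ ball (0 : En n) 1 := ball_subset_ball (by norm_num) hx
    refine ⟨hx1, ?_⟩
    simp only [norm_zero, inner_zero_right] at hle2
    have h1 : |inner ℝ p x| ≤ ‖p‖ * ‖x‖ := abs_real_inner_le_norm p x
    have h3 := (abs_le.1 h1).2
    simp only [mem_ball, dist_zero_right] at hp
    have h4 : ‖p‖ ^ 2 < 64 * c := by nlinarith [norm_nonneg p]
    nlinarith [sq_nonneg (64 * ‖x‖ - ‖p‖)]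

theorem fderiv_gauss {n : ℕ} (A q : ℝ) (x : En n) :
    HasFDerivAt (fun x : En n => -(A * Real.exp (-q * ‖x‖ ^ 2)))
      ((2 * q * A * Real.exp (-q * ‖x‖ ^ 2)) • innerSL ℝ x) x := by
  have := (((fderiv_normsq (-q) x).exp).const_mul A).neg
  refine this.congr_fderiv ?_
  ext y
  simp
  ring

theorem D2_gauss {n : ℕ} (A q : ℝ) (x e : En n) :
    D2 (fun x : En n => -(A * Real.exp (-q * ‖x‖ ^ 2))) x e e =
      2 * q * A * Real.exp (-q * ‖x‖ ^ 2) * (‖e‖ ^ 2 - 2 * q * (inner ℝ x e) ^ 2) := by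
  have h1 : fderiv ℝ (fun x : En n => -(A * Real.exp (-q * ‖x‖ ^ 2))) =
      fun x => (2 * q * A * Real.exp (-q * ‖x‖ ^ 2)) • (innerSL ℝ (E := En n)) x := by
    ext1 x
    exact (fderiv_gauss A q x).fderiv
  have h2 : HasFDerivAt (fun x : En n => 2 * q * A * Real.exp (-q * ‖x‖ ^ 2)) _ x :=
    ((fderiv_normsq (-q) x).exp).const_mul (2 * q * A)
  have h3 := h2.smul ((innerSL ℝ (E := En n)).hasFDerivAt (x := x))
  have h4 := h3.fderiv
  rw [D2, h1]
  change (fderiv ℝ ((fun x : En n => 2 * q * A * Real.exp (-q * ‖x‖ ^ 2)) • ⇑(innerSL ℝ (E := En n))) x) e e = _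
  rw [h4]
  have h5 : (innerSL ℝ e) e = ‖e‖ ^ 2 := by
    rw [innerSL_apply_apply, real_inner_self_eq_norm_sq]
  have h6 : (innerSL ℝ x) e = inner ℝ x e := innerSL_apply_apply _ _ _
  simp [h5, h6]
  ring

/-- Doubling lemma at unit scale. -/
theorem doubling_unit (n : ℕ) {K : ℝ} (hK : 0 ≤ K) : ∃ M μ : ℝ, 1 < M ∧ 0 < μ ∧ μ ≤ 1 ∧
    ∀ v : En n → ℝ, (∀ x ∈ ball (0 : En n) 4, 0 ≤ v x) → IsSub K (fun x => - v x) (ball 0 4) →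
    ∀ x0 ∈ ball (0 : En n) 3, v x0 ≤ 1 →
    ENNReal.ofReal μ * volume (ball (0 : En n) 1) ≤ volume {x : En n | x ∈ ball 0 1 ∧ v x ≤ M} := by
  obtain ⟨q, hq⟩ : ∃ q, q = K + 1 := ⟨_, rfl⟩
  have hq1 : 1 ≤ q := by linarith
  have hq0 : 0 < q := by linarith
  obtain ⟨R, hR⟩ : ∃ R : ℝ, R = 7 / 2 := ⟨_, rfl⟩
  have hgap : 0 < Real.exp (-q * 3 ^ 2) - Real.exp (-q * R ^ 2) := by
    rw [sub_pos]; apply Real.exp_lt_exp.2; rw [hR]; nlinarith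
  obtain ⟨e3, he3⟩ : ∃ e, e = Real.exp (-q * 3 ^ 2) := ⟨_, rfl⟩
  obtain ⟨eR, heR⟩ : ∃ e, e = Real.exp (-q * R ^ 2) := ⟨_, rfl⟩
  have heRp : 0 < eR := heR ▸ Real.exp_pos _
  rw [← he3, ← heR] at hgap
  obtain ⟨A, hA0, hA3⟩ : ∃ A : ℝ, 0 < A ∧ A * e3 - A * eR = 3 :=
    ⟨3 / (e3 - eR), div_pos (by norm_num) hgap, by rw [← mul_sub, div_mul_cancel₀ _ hgap.ne']⟩
  obtain ⟨Z, hZ⟩ : ∃ Z, Z = 2 * q * A := ⟨_, rfl⟩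
  have hZ0 : 0 < Z := by rw [hZ]; positivity
  refine ⟨A + 1, min 1 (((1 / 7) / ((K + 1) * Z)) ^ n), by linarith, by positivity, min_le_left _ _, ?_⟩
  intro v hv hsub x0 hx0 hvx0
  have hexp1 : ∀ x : En n, Real.exp (-q * ‖x‖ ^ 2) ≤ 1 := by
    intro x; rw [Real.exp_le_one_iff]; nlinarith [sq_nonneg ‖x‖]
  have hx03 : ‖x0‖ < 3 := by simpa using hx0
  have hφx0 : A * e3 ≤ A * Real.exp (-q * ‖x0‖ ^ 2) := by
    rw [he3]
    apply mul_le_mul_of_nonneg_left _ hA0.le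
    apply Real.exp_le_exp.2
    have : ‖x0‖ ^ 2 ≤ 3 ^ 2 := by gcongr
    nlinarith
  have key := contact2 (n := n) hK (w := fun x => - v x)
    (φ := fun x => -(A * Real.exp (-q * ‖x‖ ^ 2))) (R := R) (R' := 4)
    (δ := 1 / 7) (Z := Z) (by rw [hR]; norm_num) hsub
    (((contDiff_const.mul (contDiff_norm_sq ℝ)).exp).const_smul A |>.neg) hZ0.le
    (fun x _ e => by
      rw [D2_gauss]
      have h1 := hexp1 x
      have h2 : 0 < Real.exp (-q * ‖x‖ ^ 2) := Real.exp_pos _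
      calc 2 * q * A * Real.exp (-q * ‖x‖ ^ 2) * (‖e‖ ^ 2 - 2 * q * (inner ℝ x e) ^ 2) ≤
          2 * q * A * Real.exp (-q * ‖x‖ ^ 2) * ‖e‖ ^ 2 := by
            apply mul_le_mul_of_nonneg_left _ (by positivity)
            have : 0 ≤ 2 * q * (inner ℝ x e) ^ 2 := by positivity
            linarith
        _ ≤ 2 * q * A * 1 * ‖e‖ ^ 2 := by gcongr
        _ = _ := by rw [mul_one, hZ]) (x0 := x0) (by
          simp only [mem_ball, dist_zero_right, hR]; linarith) ?_
    (E0 := {x : En n | x ∈ ball 0 1 ∧ v x ≤ A + 1}) ?_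
  · have e1 : ball (0 : En n) (1 / 7) = ball (0 : En n) ((1 / 7) * 1) := by rw [mul_one]
    rw [e1, Measure.addHaar_ball_mul_of_pos _ _ (by positivity), finrank_euclideanSpace_fin] at key
    have e2 : ((1 / 7) / ((K + 1) * Z)) ^ n = (((K + 1) * Z) ^ n)⁻¹ * (1 / 7) ^ n := by
      rw [← inv_pow, ← mul_pow]
      congr 1
      field_simp
    have hp : 0 < ((K + 1) * Z) ^ n := by positivity
    calc _ ≤ ENNReal.ofReal (((1 / 7) / ((K + 1) * Z)) ^ n) * volume (ball (0 : En n) 1) := by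
          gcongr; exact min_le_right _ _
      _ ≤ ENNReal.ofReal (((K + 1) * Z) ^ n)⁻¹ * (ENNReal.ofReal (((K + 1) * Z) ^ n) *
          volume {x : En n | x ∈ ball 0 1 ∧ v x ≤ A + 1}) := by
            rw [e2, ENNReal.ofReal_mul (by positivity), mul_assoc]; gcongr
      _ = _ := by
        rw [← mul_assoc, ← ENNReal.ofReal_mul (by positivity), inv_mul_cancel₀ hp.ne']
        simp
  · intro p hp x hx
    have h1 : |inner ℝ p x| ≤ ‖p‖ * ‖x‖ := abs_real_inner_le_norm p x
    have h1' : |inner ℝ p x0| ≤ ‖p‖ * ‖x0‖ := abs_real_inner_le_norm p x0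
    have h2 : 0 ≤ v x := hv x (by simp [hx]; norm_num [hR])
    simp only [mem_ball, dist_zero_right] at hp
    rw [hx] at h1 ⊢
    rw [← heR]
    have h3 := (abs_le.1 h1).2
    have h4 := (abs_le.1 h1').1
    have h5 : ‖p‖ * R ≤ 1 / 2 := by rw [hR]; linarith
    have h6 : ‖p‖ * ‖x0‖ ≤ 3 / 7 := by nlinarith [norm_nonneg p, norm_nonneg x0]
    linarith
  · intro x hx p hp hle2 hS hle
    simp only [mem_ball, dist_zero_right] at hp hx
    have h1 : |inner ℝ p x| ≤ ‖p‖ * ‖x‖ := abs_real_inner_le_norm p x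
    have h1' : |inner ℝ p x0| ≤ ‖p‖ * ‖x0‖ := abs_real_inner_le_norm p x0
    have h3 := (abs_le.1 h1).2
    have h4 := (abs_le.1 h1').1
    have h5 : ‖p‖ * ‖x‖ ≤ (1 / 7) * (7 / 2) := mul_le_mul hp.le (hR ▸ hx.le) (norm_nonneg _) (by norm_num)
    have h6 : ‖p‖ * ‖x0‖ ≤ 3 / 7 := by nlinarith [norm_nonneg p, norm_nonneg x0]
    have h7 : A * Real.exp (-q * ‖x‖ ^ 2) ≤ A := by nlinarith [hexp1 x]
    have h8 : 0 < A * eR := by positivity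
    refine ⟨?_, by linarith⟩
    simp only [mem_ball, dist_zero_right]
    by_contra hcon
    push Not at hcon
    obtain ⟨z0, hz0⟩ : ∃ z0 : ℝ, z0 = 2 * q * A * Real.exp (-q * ‖x‖ ^ 2) := ⟨_, rfl⟩
    have hz0p : 0 < z0 := by rw [hz0]; positivity
    have a1 := hS z0 hz0p.le (fun e => (hle e).trans (by
      rw [D2_gauss, ← hz0]
      apply mul_le_mul_of_nonneg_left _ hz0p.le
      have : 0 ≤ 2 * q * (inner ℝ x e) ^ 2 := by positivity
      linarith)) x
    have a2 := hle x
    rw [D2_gauss, ← hz0, real_inner_self_eq_norm_sq] at a2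
    have a3 := a1.trans a2
    have a4 : 0 ≤ z0 * ‖x‖ ^ 2 * (1 + K - 2 * q * ‖x‖ ^ 2) := by nlinarith
    have a5 : 0 < z0 * ‖x‖ ^ 2 := by positivity
    have a6 : 0 ≤ 1 + K - 2 * q * ‖x‖ ^ 2 := nonneg_of_mul_nonneg_right a4 a5
    have a7 : 1 ≤ ‖x‖ ^ 2 := one_le_pow₀ hcon
    nlinarith

theorem vol_affine {n : ℕ} (z : En n) {r : ℝ} (hr : 0 < r) (s : Set (En n)) :
    volume s = ENNReal.ofReal (r ^ n) * volume {y : En n | z + r • y ∈ s} := by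
  have h1 : {y : En n | z + r • y ∈ s} = (fun y => r • y) ⁻¹' ((fun y => z + y) ⁻¹' s) := rfl
  rw [h1, Measure.addHaar_preimage_smul _ hr.ne', measure_preimage_add, finrank_euclideanSpace_fin,
    ← mul_assoc, ← ENNReal.ofReal_mul (by positivity), abs_of_pos (by positivity),
    mul_inv_cancel₀ (by positivity)]
  simp

theorem ae_affine {n : ℕ} (z : En n) {r : ℝ} (hr : 0 < r) {P : En n → Prop} (h : ∀ᵐ x, P x) :
    ∀ᵐ x : En n, P (z + r • x) := by
  rw [ae_iff] at h ⊢
  rw [vol_affine z hr] at h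
  rcases mul_eq_zero.1 h with h | h
  · exact absurd (ENNReal.ofReal_eq_zero.1 h) (not_le.2 (by positivity))
  · exact h

theorem dist_smul_clm {n : ℕ} (c : ℝ) (f g : En n →L[ℝ] ℝ) :
    dist (c • f) (c • g) = ‖c‖ * dist f g := by
  have : c • f - c • g = c • (f - g) := by ext; simp [mul_sub]
  rw [dist_eq_norm, this, norm_smul, dist_eq_norm]

theorem IsSub.affine' {n : ℕ} {K : ℝ} {w : En n → ℝ} {z : En n} {r : ℝ} {U V : Set (En n)}
    (hr : 0 < r) (hV : IsOpen V)
    (h : IsSub K w U) (hmem : ∀ x ∈ V, z + r • x ∈ U) (a b : ℝ) (ha : 0 < a) :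
    IsSub K (fun x => a * w (z + r • x) + b) V := by
  have haff : ∀ x : En n, HasFDerivAt (fun x : En n => z + r • x) (r • ContinuousLinearMap.id ℝ (En n)) x :=
    fun x => ((hasFDerivAt_id x).const_smul r).const_add z
  have hfd : ∀ x ∈ V, HasFDerivAt (fun x => a * w (z + r • x) + b)
      ((a * r) • fderiv ℝ w (z + r • x)) x := by
    intro x hx
    have h1 := (((h.diff _ (hmem x hx)).hasFDerivAt.comp x (haff x)).const_mul a).add_const b
    refine h1.congr_fderiv ?_
    ext y
    simp
    ring
  refine ⟨fun x hx => (hfd x hx).differentiableAt, ?_, ?_⟩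
  · obtain ⟨L, hL⟩ := h.lip
    refine ⟨(a * r * L * r).toNNReal, LipschitzOnWith.of_dist_le_mul fun x hx y hy => ?_⟩
    rw [(hfd x hx).fderiv, (hfd y hy).fderiv, Real.coe_toNNReal _ (by positivity)]
    refine (dist_smul_clm (a * r) _ _).trans_le ?_
    have := hL.dist_le_mul _ (hmem x hx) _ (hmem y hy)
    rw [dist_add_left, dist_smul₀, Real.norm_of_nonneg hr.le] at this
    rw [Real.norm_of_nonneg (by positivity)]
    calc _ ≤ a * r * (L * (r * dist x y)) := by gcongr
      _ = _ := by ring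
  · filter_upwards [ae_affine z hr h.ae] with x hx hxR
    obtain ⟨hd, hS⟩ := hx (hmem x hxR)
    have hev : fderiv ℝ (fun x => a * w (z + r • x) + b) =ᶠ[𝓝 x]
        fun x => (a * r) • fderiv ℝ w (z + r • x) := by
      filter_upwards [hV.mem_nhds hxR] with y hy using (hfd y hy).fderiv
    have h2 := (hd.hasFDerivAt.comp x (haff x)).const_smul (a * r)
    have h3 := h2.congr_of_eventuallyEq hev
    refine ⟨h3.differentiableAt, ?_⟩
    have h4 : ∀ e, D2 (fun x => a * w (z + r • x) + b) x e e = (a * r ^ 2) * D2 w (z + r • x) e e := by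
      intro e
      rw [D2, h3.fderiv]
      simp
      ring
    intro c hc hX e
    have hp : 0 < a * r ^ 2 := by positivity
    have h5 := hS (c / (a * r ^ 2)) (by positivity) (fun e => by
      have := hX e
      rw [h4] at this
      rw [div_mul_eq_mul_div, le_div_iff₀ hp]
      linarith) e
    rw [h4]
    have h6 := mul_le_mul_of_nonneg_left h5 hp.le
    refine le_trans (le_of_eq ?_) h6
    field_simp

theorem IsSub.affine {n : ℕ} {K : ℝ} {w : En n → ℝ} {z : En n} {r R : ℝ} (hr : 0 < r)
    (h : IsSub K w (ball z (r * R))) (a b : ℝ) (ha : 0 < a) :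
    IsSub K (fun x => a * w (z + r • x) + b) (ball 0 R) := by
  refine IsSub.affine' hr isOpen_ball h ?_ a b ha
  intro x hx
  rw [mem_ball, dist_zero_right] at hx
  rw [mem_ball, dist_self_add_left, norm_smul, Real.norm_of_nonneg hr.le]
  gcongr

theorem IsSub.const_affine {n : ℕ} {K : ℝ} {w : En n → ℝ} {V : Set (En n)} (hV : IsOpen V)
    (h : IsSub K w V) (a b : ℝ) (ha : 0 < a) :
    IsSub K (fun x => a * w x + b) V := by
  have h1 := IsSub.affine' (z := 0) (r := 1) one_pos hV h (by simp) a b ha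
  simpa using h1

theorem vol_ball_affine {n : ℕ} (z : En n) {r : ℝ} (hr : 0 < r) (P : En n → Prop) :
    volume {x : En n | x ∈ ball z r ∧ P x} =
      ENNReal.ofReal (r ^ n) * volume {x : En n | x ∈ ball 0 1 ∧ P (z + r • x)} := by
  rw [vol_affine z hr]
  congr 2
  ext y
  simp only [mem_ofPred_eq, mem_ball, dist_self_add_left, dist_zero_right, norm_smul,
    Real.norm_of_nonneg hr.le]
  have : r * ‖y‖ < r ↔ ‖y‖ < 1 := by
    constructor
    · intro h; nlinarith
    · intro h; nlinarith
  rw [this]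

theorem vol_ball_eq {n : ℕ} (z : En n) {r : ℝ} (hr : 0 < r) :
    volume (ball z r) = ENNReal.ofReal (r ^ n) * volume (ball (0 : En n) 1) := by
  have := vol_ball_affine z hr (fun _ => True)
  simp only [and_true] at this
  exact this

/-- Scaled local maximum principle. -/
theorem lmp {n : ℕ} {K c : ℝ} (hK : 0 ≤ K) (hc : 0 < c) (hc1 : c ≤ 1) {w : En n → ℝ} {z : En n}
    {r W : ℝ} (hr : 0 < r) (hW : 0 < W)
    (hw : IsSub K w (ball z r)) (hle : ∀ x ∈ ball z r, w x ≤ W) (h0 : 0 ≤ w z) :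
    ENNReal.ofReal ((c / (8 * (K + 1))) ^ n) * volume (ball z r) ≤
      volume {x : En n | x ∈ ball z r ∧ -(c * W) < w x} := by
  have h1 := IsSub.affine (z := z) (r := r) (R := 1) hr (by simpa using hw) W⁻¹ 0 (by positivity)
  have h2 := lmp_unit hK hc hc1 h1 (fun x hx => by
    rw [add_zero, inv_mul_le_iff₀ hW, mul_one]
    apply hle
    simp only [mem_ball, dist_self_add_left, dist_zero_right, norm_smul,
      Real.norm_of_nonneg hr.le] at hx ⊢
    nlinarith) (by simpa using mul_nonneg (by positivity) h0)
  rw [vol_ball_affine z hr, vol_ball_eq z hr, mul_left_comm]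
  gcongr
  refine h2.trans (measure_mono fun x hx => ⟨hx.1, ?_⟩)
  have := hx.2
  rw [add_zero, lt_inv_mul_iff₀ hW] at this
  linarith

/-- Scaled doubling lemma. -/
theorem doubling (n : ℕ) {K : ℝ} (hK : 0 ≤ K) : ∃ M μ : ℝ, 1 < M ∧ 0 < μ ∧ μ ≤ 1 ∧
    ∀ (v : En n → ℝ) (z : En n) (t a : ℝ), 0 < t → 0 < a → (∀ x ∈ ball z (t * 4), 0 ≤ v x) →
    IsSub K (fun x => - v x) (ball z (t * 4)) →
    ∀ x0 ∈ ball z (t * 3), v x0 ≤ a →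
    ENNReal.ofReal μ * volume (ball z t) ≤ volume {x : En n | x ∈ ball z t ∧ v x ≤ M * a} := by
  obtain ⟨M, μ, hM, hμ, hμ1, H⟩ := doubling_unit n hK
  refine ⟨M, μ, hM, hμ, hμ1, fun v z t a ht ha hv hsub x0 hx0 hvx0 => ?_⟩
  have h1 := IsSub.affine (z := z) (r := t) (R := 4) ht hsub a⁻¹ 0 (by positivity)
  have hx0' : z + t • (t⁻¹ • (x0 - z)) = x0 := by
    rw [smul_smul, mul_inv_cancel₀ ht.ne']; simp
  have h2 := H (fun x => a⁻¹ * v (z + t • x)) (fun x hx => by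
    apply mul_nonneg (by positivity)
    apply hv
    simp only [mem_ball, dist_self_add_left, dist_zero_right, norm_smul,
      Real.norm_of_nonneg ht.le] at hx ⊢
    gcongr) (by convert h1 using 2; ring) (t⁻¹ • (x0 - z)) (by
      rw [mem_ball, dist_eq_norm] at hx0
      rw [mem_ball, dist_zero_right, norm_smul, Real.norm_of_nonneg (by positivity),
        inv_mul_lt_iff₀ ht]
      exact hx0) (by
      simp only [hx0']
      rw [inv_mul_le_iff₀ ha]; linarith)
  rw [vol_ball_affine z ht, vol_ball_eq z ht, mul_left_comm]
  gcongr
  refine h2.trans (measure_mono fun x hx => ⟨hx.1, ?_⟩)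
  have := hx.2
  rw [inv_mul_le_iff₀ ha] at this
  linarith

theorem ink_covering {n : ℕ} {μ : ℝ} (hμ : 0 < μ) {E F : Set (En n)} (hFm : MeasurableSet F)
    (c : En n → En n) (r : En n → ℝ) (hr0 : ∀ x ∈ F, 0 < r x) (hr1 : ∀ x ∈ F, r x ≤ 1)
    (hx : ∀ x ∈ F, x ∈ ball (c x) (r x)) (hE : ∀ x ∈ F, ball (c x) (r x) ⊆ E)
    (hvol : ∀ x ∈ F, ENNReal.ofReal μ * volume (ball (c x) (r x)) ≤ volume (ball (c x) (r x) \ F)) :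
    volume F ≤ ENNReal.ofReal (5 ^ n / μ) * volume (E \ F) := by
  obtain ⟨u, huF, hdisj, hcov⟩ := Vitali.exists_disjoint_subfamily_covering_enlargement_closedBall
    F c r 1 hr1 5 (by norm_num)
  have hcount : u.Countable := by
    apply hdisj.countable_of_nonempty_interior
    intro a ha
    exact ⟨a, ball_subset_interior_closedBall (hx a (huF ha))⟩
  have h1 : F ⊆ ⋃ b ∈ u, closedBall (c b) (5 * r b) := by
    intro x hxF
    obtain ⟨b, hb, hsub⟩ := hcov x hxF
    exact mem_biUnion hb (hsub (ball_subset_closedBall (hx x hxF)))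
  have h2 : ∀ b ∈ u, volume (closedBall (c b) (5 * r b)) ≤
      ENNReal.ofReal (5 ^ n / μ) * volume (ball (c b) (r b) \ F) := by
    intro b hb
    have hb0 := hr0 b (huF hb)
    rw [Measure.addHaar_closedBall _ _ (by positivity), finrank_euclideanSpace_fin]
    have h3 := hvol b (huF hb)
    rw [vol_ball_eq _ hb0] at h3
    calc _ = ENNReal.ofReal (5 ^ n / μ) * (ENNReal.ofReal μ * (ENNReal.ofReal (r b ^ n) * volume (ball (0 : En n) 1))) := by
          rw [← mul_assoc, ← mul_assoc, ← ENNReal.ofReal_mul (by positivity),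
            ← ENNReal.ofReal_mul (by positivity)]
          congr 2
          field_simp
          rw [mul_pow]
      _ ≤ _ := by gcongr
  have hd2 : u.PairwiseDisjoint (fun b => ball (c b) (r b) \ F) := by
    intro a ha b hb hab
    exact (hdisj ha hb hab).mono (sdiff_subset.trans ball_subset_closedBall)
      (sdiff_subset.trans ball_subset_closedBall)
  have := hcount.to_subtype
  calc volume F ≤ volume (⋃ b ∈ u, closedBall (c b) (5 * r b)) := measure_mono h1
    _ ≤ ∑' b : u, volume (closedBall (c b) (5 * r b)) := measure_biUnion_le _ hcount _
    _ ≤ ∑' b : u, ENNReal.ofReal (5 ^ n / μ) * volume (ball (c b) (r b) \ F) :=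
        ENNReal.tsum_le_tsum fun b => h2 b b.2
    _ = ENNReal.ofReal (5 ^ n / μ) * ∑' b : u, volume (ball (c b) (r b) \ F) := ENNReal.tsum_mul_left
    _ = ENNReal.ofReal (5 ^ n / μ) * volume (⋃ b ∈ u, ball (c b) (r b) \ F) := by
        rw [measure_biUnion hcount hd2 fun b _ => measurableSet_ball.diff hFm]
    _ ≤ _ := by
        gcongr
        apply iUnion₂_subset
        intro b hb
        exact sdiff_subset_sdiff_left (hE b (huF hb))

theorem ink_step (n : ℕ) {K : ℝ} (hK : 0 ≤ K) : ∃ M C : ℝ, 1 < M ∧ 0 < C ∧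
    ∀ v : En n → ℝ, (∀ x ∈ ball (0 : En n) 4, 0 ≤ v x) → IsSub K (fun x => - v x) (ball 0 4) →
    (∃ x1 ∈ ball (0 : En n) 1, v x1 ≤ 1) → ∀ k : ℕ,
    volume {x : En n | x ∈ ball 0 1 ∧ M ^ (k + 1) < v x} ≤
      ENNReal.ofReal C * volume ({x : En n | x ∈ ball 0 1 ∧ M ^ k < v x} \
        {x : En n | x ∈ ball 0 1 ∧ M ^ (k + 1) < v x}) := by
  obtain ⟨M, μ, hM, hμ, hμ1, H⟩ := doubling n hK
  refine ⟨M, 5 ^ n / μ, hM, by positivity, ?_⟩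
  rintro v hv hsub ⟨x1, hx1, hvx1⟩ k
  set F : Set (En n) := {x : En n | x ∈ ball 0 1 ∧ M ^ (k + 1) < v x} with hF
  have hcont : ContinuousOn v (ball 0 4) := by
    intro x hx
    have h1 : ContinuousAt (fun x => - v x) x := (hsub.diff x hx).continuousAt
    have h2 : ContinuousAt (fun x => - - v x) x := h1.neg
    simp only [neg_neg] at h2
    exact h2.continuousWithinAt
  have hFo : IsOpen F := (hcont.mono (ball_subset_ball (by norm_num))).isOpen_inter_preimage
    isOpen_ball isOpen_Ioi
  have hMk : 0 < M ^ k := by positivity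
  have hball : ∀ (x : En n) (t : ℝ), ‖x‖ < 1 → 0 < t → t ≤ 1 → ball ((1 - t) • x) t ⊆ ball 0 1 ∧
      ball ((1 - t) • x) (t * 4) ⊆ ball 0 4 := by
    intro x t hx ht ht1
    have h1 : ‖(1 - t) • x‖ ≤ 1 - t := by
      rw [norm_smul, Real.norm_of_nonneg (by linarith)]
      nlinarith [norm_nonneg x]
    constructor
    · apply ball_subset_ball'
      rw [dist_zero_right]; linarith
    · apply ball_subset_ball'
      rw [dist_zero_right]; linarith
  have hdiff : ∀ z t, ball z t ⊆ ball (0 : En n) 1 → 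
      {x : En n | x ∈ ball z t ∧ v x ≤ M * M ^ k} ⊆ ball z t \ F := by
    rintro z t hzt x ⟨hx, hvx⟩
    refine ⟨hx, fun hxF => ?_⟩
    have := hxF.2
    rw [pow_succ'] at this
    linarith
  have main : ∀ x ∈ F, ∃ (c : En n) (r : ℝ), 0 < r ∧ r ≤ 1 ∧ x ∈ ball c r ∧
      ball c r ⊆ {x : En n | x ∈ ball 0 1 ∧ M ^ k < v x} ∧
      ENNReal.ofReal μ * volume (ball c r) ≤ volume (ball c r \ F) := by
    intro x hxF
    have hx1' : ‖x‖ < 1 := by simpa using hxF.1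
    set t : ℕ → ℝ := fun j => (1 / 2) ^ j with ht
    have ht0 : ∀ j, 0 < t j := fun j => by positivity
    have ht1 : ∀ j, t j ≤ 1 := fun j => pow_le_one₀ (by norm_num) (by norm_num)
    set P : ℕ → Prop := fun j => volume (ball ((1 - t j) • x) (t j) \ F) <
      ENNReal.ofReal μ * volume (ball ((1 - t j) • x) (t j)) with hP
    have hP0 : ¬ P 0 := by
      simp only [hP, ht, not_lt]
      refine (H v _ _ (M ^ k) (by norm_num) hMk ?_ ?_ x1 ?_ ?_).trans (measure_mono (hdiff _ _ ?_))
      · simpa using hv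
      · simpa using hsub
      · simp at hx1 ⊢; linarith
      · exact hvx1.trans (one_le_pow₀ hM.le)
      · simp
    have hPex : ∃ j, P j := by
      obtain ⟨ε, hε, hεF⟩ := Metric.isOpen_iff.1 hFo x hxF
      obtain ⟨j, hj⟩ := exists_pow_lt_of_lt_one (show (0:ℝ) < ε / 2 by positivity) (show (1/2 : ℝ) < 1 by norm_num)
      refine ⟨j, ?_⟩
      have : ball ((1 - t j) • x) (t j) \ F = ∅ := by
        rw [sdiff_eq_empty]
        refine Subset.trans ?_ hεF
        apply ball_subset_ball'
        have : (1 - t j) • x - x = (-(t j)) • x := by module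
        rw [dist_eq_norm, this, norm_smul, norm_neg, Real.norm_of_nonneg (ht0 j).le]
        have : t j < ε / 2 := hj
        nlinarith [ht0 j, norm_nonneg x]
      simp only [hP]
      rw [this, measure_empty]
      exact ENNReal.mul_pos (ENNReal.ofReal_pos.2 hμ).ne' (measure_ball_pos _ _ (ht0 j)).ne'
    classical
    obtain ⟨i, hi⟩ : ∃ i, Nat.find hPex = i + 1 := by
      refine Nat.exists_eq_succ_of_ne_zero fun h => hP0 ?_
      rw [← h]; exact Nat.find_spec hPex
    have hgood : P (i + 1) := hi ▸ Nat.find_spec hPex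
    have hbad : ¬ P i := Nat.find_min hPex (by omega)
    have htt : t i = 2 * t (i + 1) := by simp only [ht, pow_succ]; ring
    have hbig : ∀ y ∈ ball ((1 - t (i + 1)) • x) (t (i + 1) * 3), M ^ k < v y := by
      intro y hy
      by_contra hcon
      push Not at hcon
      have hb := hball x (t (i + 1)) hx1' (ht0 _) (ht1 _)
      have := (H v _ _ (M ^ k) (ht0 (i + 1)) hMk (fun z hz => hv z (hb.2 hz)) (hsub.mono hb.2) y hy
        hcon).trans (measure_mono (hdiff _ _ hb.1))
      exact absurd hgood (not_lt.2 this)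
    have hb := hball x (t i) hx1' (ht0 _) (ht1 _)
    refine ⟨(1 - t i) • x, t i, ht0 i, ht1 i, ?_, fun y hy => ⟨hb.1 hy, hbig y ?_⟩, not_lt.1 hbad⟩
    · have : x - (1 - t i) • x = t i • x := by module
      rw [mem_ball, dist_eq_norm, this, norm_smul, Real.norm_of_nonneg (ht0 i).le]
      nlinarith [ht0 i]
    · refine ball_subset_ball' ?_ hy
      have : (1 - t i) • x - (1 - t (i + 1)) • x = (-(t (i + 1))) • x := by rw [htt]; module
      rw [dist_eq_norm, this, norm_smul, norm_neg, Real.norm_of_nonneg (ht0 _).le, htt]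
      nlinarith [ht0 (i + 1)]
  choose! c r h1 h2 h3 h4 h5 using main
  exact ink_covering hμ hFo.measurableSet c r h1 h2 h3 h4 h5

theorem Leps_unit (n : ℕ) {K : ℝ} (hK : 0 ≤ K) {ε : ℝ} (hε : 0 < ε) : ∃ M : ℝ, 0 < M ∧
    ∀ v : En n → ℝ, (∀ x ∈ ball (0 : En n) 4, 0 ≤ v x) → IsSub K (fun x => - v x) (ball 0 4) →
    (∃ x1 ∈ ball (0 : En n) 1, v x1 ≤ 1) → 
    volume {x : En n | x ∈ ball 0 1 ∧ M < v x} ≤ ENNReal.ofReal ε * volume (ball (0 : En n) 1) := by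
  obtain ⟨M, C, hM, hC, H⟩ := ink_step n hK
  have hq0 : 0 ≤ C / (1 + C) := by positivity
  have hq1 : C / (1 + C) < 1 := by rw [div_lt_one (by positivity)]; linarith
  obtain ⟨k, hk⟩ := exists_pow_lt_of_lt_one hε hq1
  refine ⟨M ^ k, by positivity, fun v hv hsub hx1 => ?_⟩
  have H' := H v hv hsub hx1
  have hcont : ContinuousOn v (ball 0 4) := by
    intro x hx
    have h1 : ContinuousAt (fun x => - v x) x := (hsub.diff x hx).continuousAt
    have h2 : ContinuousAt (fun x => - - v x) x := h1.neg
    simp only [neg_neg] at h2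
    exact h2.continuousWithinAt
  have hmeas : ∀ k : ℕ, MeasurableSet {x : En n | x ∈ ball 0 1 ∧ M ^ k < v x} := fun k =>
    ((hcont.mono (ball_subset_ball (by norm_num))).isOpen_inter_preimage
      isOpen_ball isOpen_Ioi).measurableSet
  have hfin : ∀ s : Set (En n), s ⊆ ball 0 1 → volume s ≠ ∞ := fun s hs =>
    ((measure_mono hs).trans_lt measure_ball_lt_top).ne
  have ind : ∀ k : ℕ, volume.real {x : En n | x ∈ ball 0 1 ∧ M ^ k < v x} ≤
      (C / (1 + C)) ^ k * volume.real (ball (0 : En n) 1) := by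
    intro k
    induction k with
    | zero =>
      rw [pow_zero (C / (1 + C)), one_mul]
      exact measureReal_mono (fun x hx => hx.1) (hfin _ subset_rfl)
    | succ k ih =>
      have h1 := H' k
      have hsubset : {x : En n | x ∈ ball 0 1 ∧ M ^ (k + 1) < v x} ⊆
          {x : En n | x ∈ ball 0 1 ∧ M ^ k < v x} := by
        rintro x ⟨hx, hvx⟩
        exact ⟨hx, lt_of_le_of_lt (pow_le_pow_right₀ hM.le (by omega)) hvx⟩
      have h2 := measureReal_sdiff_add_inter (μ := volume) (s := {x : En n | x ∈ ball 0 1 ∧ M ^ k < v x})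
        (hmeas (k + 1)) (hfin _ fun x hx => hx.1)
      rw [inter_eq_self_of_subset_right hsubset] at h2
      have h3 := ENNReal.toReal_mono (ENNReal.mul_ne_top ENNReal.ofReal_ne_top (hfin _ fun x hx => hx.1.1)) h1
      rw [ENNReal.toReal_mul, ENNReal.toReal_ofReal hC.le] at h3
      change volume.real _ ≤ C * volume.real _ at h3
      have h4 : volume.real {x : En n | x ∈ ball 0 1 ∧ M ^ (k + 1) < v x} ≤
          C / (1 + C) * volume.real {x : En n | x ∈ ball 0 1 ∧ M ^ k < v x} := by
        rw [div_mul_eq_mul_div, le_div_iff₀ (by positivity)]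
        nlinarith
      rw [pow_succ' (C / (1 + C)), mul_assoc]
      exact h4.trans (mul_le_mul_of_nonneg_left ih hq0)
  have h6 := ind k
  have h7 : volume.real {x : En n | x ∈ ball 0 1 ∧ M ^ k < v x} ≤ ε * volume.real (ball (0 : En n) 1) :=
    h6.trans (by gcongr)
  rw [← ENNReal.toReal_le_toReal (hfin _ fun x hx => hx.1) (ENNReal.mul_ne_top ENNReal.ofReal_ne_top (hfin _ subset_rfl)),
    ENNReal.toReal_mul, ENNReal.toReal_ofReal hε.le]
  exact h7

/-- Weak `L^ε` estimate at all scales. -/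
theorem Leps (n : ℕ) {K : ℝ} (hK : 0 ≤ K) {ε : ℝ} (hε : 0 < ε) : ∃ M : ℝ, 0 < M ∧
    ∀ (v : En n → ℝ) (z : En n) (t a : ℝ), 0 < t → 0 < a → (∀ x ∈ ball z (t * 4), 0 ≤ v x) →
    IsSub K (fun x => - v x) (ball z (t * 4)) →
    ∀ x0 ∈ ball z t, v x0 ≤ a →
    volume {x : En n | x ∈ ball z t ∧ M * a < v x} ≤ ENNReal.ofReal ε * volume (ball z t) := by
  obtain ⟨M, hM, H⟩ := Leps_unit n hK hε
  refine ⟨M, hM, fun v z t a ht ha hv hsub x0 hx0 hvx0 => ?_⟩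
  have h1 := IsSub.affine (z := z) (r := t) (R := 4) ht hsub a⁻¹ 0 (by positivity)
  have hx0' : z + t • (t⁻¹ • (x0 - z)) = x0 := by
    rw [smul_smul, mul_inv_cancel₀ ht.ne']; simp
  have h2 := H (fun x => a⁻¹ * v (z + t • x)) (fun x hx => by
    apply mul_nonneg (by positivity)
    apply hv
    simp only [mem_ball, dist_self_add_left, dist_zero_right, norm_smul,
      Real.norm_of_nonneg ht.le] at hx ⊢
    gcongr) (by convert h1 using 2; ring) (Exists.intro (t⁻¹ • (x0 - z)) (And.intro (by
      rw [mem_ball, dist_eq_norm] at hx0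
      rw [mem_ball, dist_zero_right, norm_smul, Real.norm_of_nonneg (by positivity),
        inv_mul_lt_iff₀ ht]
      simpa using hx0) (by
      simp only [hx0']
      rw [inv_mul_le_iff₀ ha]; linarith)))
  rw [vol_ball_affine z ht, vol_ball_eq z ht, mul_left_comm]
  apply mul_le_mul_right
  refine le_trans (measure_mono fun x hx => ?_) h2
  refine ⟨hx.1, ?_⟩
  have := hx.2
  rw [lt_inv_mul_iff₀ ha]
  linarith

/-- Bound on partial sums of the diagonal of `X` in any orthonormal basis. -/
def PB {n : ℕ} (X : En n →L[ℝ] En n →L[ℝ] ℝ) (m : ℝ) : Prop :=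
  ∀ (b : OrthonormalBasis (Fin n) ℝ (En n)) (S : Finset (Fin n)), ∑ k ∈ S, X (b k) (b k) ≤ m

theorem spectral {n : ℕ} {X : En n →L[ℝ] En n →L[ℝ] ℝ} (hs : ∀ a b, X a b = X b a) :
    ∃ (v : OrthonormalBasis (Fin n) ℝ (En n)) (μ : Fin n → ℝ),
      ∀ e, X e e = ∑ i, μ i * (inner ℝ (v i) e) ^ 2 := by
  let T : En n →ₗ[ℝ] En n :=
    { toFun := fun x => (InnerProductSpace.toDual ℝ (En n)).symm (X x)
      map_add' := fun a b => by rw [map_add, map_add]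
      map_smul' := fun r a => by simp }
  have hTi : ∀ x y, inner ℝ (T x) y = X x y := by
    intro x y
    exact InnerProductSpace.toDual_symm_apply
  have hsym : T.IsSymmetric := by
    intro x y
    rw [hTi, real_inner_comm, hTi, hs]
  have hn : Module.finrank ℝ (En n) = n := finrank_euclideanSpace_fin
  refine ⟨hsym.eigenvectorBasis hn, hsym.eigenvalues hn, fun e => ?_⟩
  rw [← hTi, ← (hsym.eigenvectorBasis hn).sum_inner_mul_inner (T e) e]
  refine Finset.sum_congr rfl fun i _ => ?_
  rw [hsym, hsym.apply_eigenvectorBasis, inner_smul_right, real_inner_comm]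
  simp
  ring

theorem PB_le {n : ℕ} {X : En n →L[ℝ] En n →L[ℝ] ℝ} {m : ℝ} (hs : ∀ a b, X a b = X b a)
    (h : PB X m) (e : En n) : X e e ≤ m * ‖e‖ ^ 2 := by
  obtain ⟨v, μ, hv⟩ := spectral hs
  have hμ : ∀ i, X (v i) (v i) = μ i := by
    intro i
    rw [hv, Finset.sum_eq_single i]
    · simp
    · intro j _ hj
      rw [v.orthonormal.2 hj]; simp
    · simp
  rw [hv, ← v.sum_sq_inner_right e, Finset.mul_sum]
  refine Finset.sum_le_sum fun i _ => ?_
  have := h v {i}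
  rw [Finset.sum_singleton, hμ] at this
  gcongr

theorem PB_norm {n : ℕ} {X : En n →L[ℝ] En n →L[ℝ] ℝ} {m K : ℝ} (hK : 1 ≤ K)
    (hs : ∀ a b, X a b = X b a) (h : PB X m) (hS : SubK K X) : ‖X‖ ≤ K * m := by
  have hm : 0 ≤ m := by simpa using h (EuclideanSpace.basisFun (Fin n) ℝ) ∅
  have h1 := PB_le hs h
  have h2 := hS m hm h1
  refine bilin_norm_le (by positivity) hs fun e => ?_
  rw [abs_le]
  refine ⟨by have := h2 e; linarith, (h1 e).trans ?_⟩
  gcongr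
  nlinarith

theorem PB_of_norm {n : ℕ} {X : En n →L[ℝ] En n →L[ℝ] ℝ} {c : ℝ} (hc : ‖X‖ ≤ c) :
    PB X (n * c) := by
  intro b S
  have hc0 : 0 ≤ c := (norm_nonneg X).trans hc
  calc ∑ k ∈ S, X (b k) (b k) ≤ ∑ k ∈ S, c := by
        refine Finset.sum_le_sum fun k _ => ?_
        have := X.le_opNorm₂ (b k) (b k)
        rw [b.orthonormal.1 k, mul_one, mul_one] at this
        exact (le_abs_self _).trans (this.trans hc)
    _ = S.card * c := by simp
    _ ≤ n * c := by
        gcongr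
        simpa using S.card_le_univ

theorem lin_alg {n : ℕ} (hn : 1 ≤ n) {X : En n →L[ℝ] En n →L[ℝ] ℝ} {m K : ℝ} (hK : 1 ≤ K)
    (hs : ∀ a b, X a b = X b a) (h : PB X m) (hS : SubK K (-X))
    (b : OrthonormalBasis (Fin n) ℝ (En n)) (S : Finset (Fin n)) {κ : ℝ} (hκ : κ = 1 / (n * K))
    (hlow : (1 - κ / 8) * m ≤ ∑ k ∈ S, X (b k) (b k)) :
    ∑ k ∈ Sᶜ, X (b k) (b k) ≤ -(κ / 2 * m) := by
  obtain ⟨v, μ, hv⟩ := spectral hs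
  have hnK : (1 : ℝ) ≤ n * K := by
    have : (1 : ℝ) ≤ n := by exact_mod_cast hn
    nlinarith
  have hm : 0 ≤ m := by simpa using h (EuclideanSpace.basisFun (Fin n) ℝ) ∅
  have hκ0 : 0 < κ := by rw [hκ]; positivity
  have hκ1 : κ ≤ 1 := by rw [hκ, div_le_one (by positivity)]; exact hnK
  have hμ : ∀ i, X (v i) (v i) = μ i := by
    intro i
    rw [hv, Finset.sum_eq_single i]
    · simp
    · intro j _ hj
      rw [v.orthonormal.2 hj]; simp
    · simp
  set a : Fin n → ℝ := fun i => ∑ k ∈ S, (inner ℝ (v i) (b k)) ^ 2 with ha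
  have hab : ∀ i, a i + ∑ k ∈ Sᶜ, (inner ℝ (v i) (b k)) ^ 2 = 1 := by
    intro i
    rw [ha, Finset.sum_add_sum_compl, b.sum_sq_inner_left (v i), v.orthonormal.1 i, one_pow]
  have ha0 : ∀ i, 0 ≤ a i := fun i => Finset.sum_nonneg fun k _ => sq_nonneg _
  have ha1 : ∀ i, a i ≤ 1 := fun i => by
    have := hab i
    have h2 : 0 ≤ ∑ k ∈ Sᶜ, (inner ℝ (v i) (b k)) ^ 2 := Finset.sum_nonneg fun k _ => sq_nonneg _
    linarith
  have e1 : ∑ k ∈ S, X (b k) (b k) = ∑ i, μ i * a i := by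
    simp_rw [hv, ha, Finset.mul_sum]
    exact Finset.sum_comm
  have e2 : ∑ k ∈ Sᶜ, X (b k) (b k) = ∑ i, μ i * (1 - a i) := by
    have : ∀ i, 1 - a i = ∑ k ∈ Sᶜ, (inner ℝ (v i) (b k)) ^ 2 := fun i => by linarith [hab i]
    simp_rw [this, hv, Finset.mul_sum]
    exact Finset.sum_comm
  set p := ∑ i, max (μ i) 0 with hp
  set q := ∑ i, max (-μ i) 0 with hq
  have hpm : p ≤ m := by
    have h1 := h v (Finset.univ.filter fun i => 0 < μ i)
    rw [Finset.sum_filter] at h1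
    refine le_trans (le_of_eq ?_) h1
    refine Finset.sum_congr rfl fun i _ => ?_
    rw [hμ]
    split_ifs with h2
    · exact max_eq_left h2.le
    · exact max_eq_right (not_lt.1 h2)
  have hq0 : 0 ≤ q := Finset.sum_nonneg fun i _ => le_max_right _ _
  have hqi : ∀ i, -μ i ≤ q := fun i => (le_max_left (-μ i) 0).trans
    (Finset.single_le_sum (f := fun i => max (-μ i) 0) (fun i _ => le_max_right _ _) (Finset.mem_univ i))
  have hKq : ∀ i, μ i ≤ K * q := by
    intro i
    have := hS q hq0 (fun e => by
      rw [neg_apply, neg_apply, hv, ← v.sum_sq_inner_right e, Finset.mul_sum, ← Finset.sum_neg_distrib]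
      refine Finset.sum_le_sum fun i _ => ?_
      rw [← neg_mul]
      have := hqi i
      gcongr) (v i)
    rw [neg_apply, neg_apply, hμ, v.orthonormal.1 i] at this
    linarith
  have hpq : p ≤ n * K * q := by
    calc p ≤ ∑ i : Fin n, K * q := Finset.sum_le_sum fun i _ => max_le (hKq i) (by positivity)
      _ = n * K * q := by simp; ring
  have hP : ∑ i, μ i * a i ≤ p - ∑ i, max (μ i) 0 * (1 - a i) := by
    rw [hp, ← Finset.sum_sub_distrib]
    refine Finset.sum_le_sum fun i _ => ?_
    have := le_max_left (μ i) 0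
    nlinarith [ha0 i]
  have hQ : ∑ i, μ i * a i ≤ p - ∑ i, max (-μ i) 0 * a i := by
    rw [hp, ← Finset.sum_sub_distrib]
    refine Finset.sum_le_sum fun i _ => ?_
    have h1 : μ i = max (μ i) 0 - max (-μ i) 0 := by
      rcases le_total 0 (μ i) with h | h
      · rw [max_eq_left h, max_eq_right (by linarith)]; ring
      · rw [max_eq_right h, max_eq_left (by linarith)]; ring
    have h2 := le_max_right (μ i) 0
    have h3 : max (μ i) 0 * a i ≤ max (μ i) 0 := mul_le_of_le_one_right h2 (ha1 i)
    calc μ i * a i = max (μ i) 0 * a i - max (-μ i) 0 * a i := by rw [← sub_mul, ← h1]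
      _ ≤ _ := by linarith
  have hR : ∑ i, μ i * (1 - a i) = ∑ i, max (μ i) 0 * (1 - a i) + ∑ i, max (-μ i) 0 * a i - q := by
    rw [hq, ← Finset.sum_add_distrib, ← Finset.sum_sub_distrib]
    refine Finset.sum_congr rfl fun i _ => ?_
    rcases le_total 0 (μ i) with h | h
    · rw [max_eq_left h, max_eq_right (by linarith)]; ring
    · rw [max_eq_right h, max_eq_left (by linarith)]; ring
  rw [e1] at hlow
  rw [e2, hR]
  have hp2 : (1 - κ / 8) * m ≤ p := by
    have : 0 ≤ ∑ i, max (μ i) 0 * (1 - a i) := Finset.sum_nonneg fun i _ =>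
      mul_nonneg (le_max_right _ _) (by linarith [ha1 i])
    linarith
  have hqκ : κ * p ≤ q := by
    rw [hκ, div_mul_eq_mul_div, one_mul, div_le_iff₀ (by positivity)]
    linarith
  nlinarith [mul_nonneg hκ0.le hm]

/-- Abstract data of a `C^{1,1}` solution of a concave uniformly elliptic equation: `G` is the set
of good points. -/
structure EKData {n : ℕ} (K : ℝ) (u : En n → ℝ) (G : Set (En n)) : Prop where
  diff : ∀ y ∈ ball (0 : En n) 1, DifferentiableAt ℝ u y
  lip : ∃ L : ℝ≥0, LipschitzOnWith L (fderiv ℝ u) (ball 0 1)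
  sub : G ⊆ ball 0 1
  ae : ∀ᵐ x, x ∈ ball (0 : En n) 1 → x ∈ G
  d2 : ∀ x ∈ G, DifferentiableAt ℝ (fderiv ℝ u) x
  conc : ∀ (s : Finset (Fin n × Bool)) (p : Fin n × Bool → En n) (x : En n),
    (∀ i ∈ s, p i ∈ G) → x ∈ G → SubK K (∑ i ∈ s, (D2 u (p i) - D2 u x))

theorem ae_shift {n : ℕ} (d : En n) {P : En n → Prop} (h : ∀ᵐ x, P x) :
    ∀ᵐ x : En n, P (x + d) := by
  have := ae_affine d one_pos h
  simpa [add_comm] using this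

theorem EKData.diffs_isSub {n : ℕ} {K : ℝ} {u : En n → ℝ} {G : Set (En n)} (D : EKData K u G)
    (s : Finset (Fin n × Bool)) (d : Fin n × Bool → En n) {V : Set (En n)} (hV : IsOpen V)
    (hV1 : V ⊆ ball 0 1) (hVd : ∀ x ∈ V, ∀ i, x + d i ∈ ball (0 : En n) 1) :
    IsSub K (fun x => ∑ i ∈ s, (u (x + d i) - u x)) V := by
  have hfd : ∀ x ∈ V, HasFDerivAt (fun x => ∑ i ∈ s, (u (x + d i) - u x))
      (∑ i ∈ s, (fderiv ℝ u (x + d i) - fderiv ℝ u x)) x := by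
    intro x hx
    refine HasFDerivAt.fun_sum fun i _ => ?_
    exact ((hasFDerivAt_comp_add_right (d i)).2 (D.diff _ (hVd x hx i)).hasFDerivAt).fun_sub (D.diff _ (hV1 hx)).hasFDerivAt
  refine ⟨fun x hx => (hfd x hx).differentiableAt, ?_, ?_⟩
  · obtain ⟨L, hL⟩ := D.lip
    refine ⟨(s.card * (2 * L) : ℝ≥0), LipschitzOnWith.of_dist_le_mul fun x hx y hy => ?_⟩
    rw [(hfd x hx).fderiv, (hfd y hy).fderiv]
    refine (dist_sum_sum_le _ _ _).trans ?_
    push_cast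
    calc _ ≤ ∑ i ∈ s, 2 * L * dist x y := by
          refine Finset.sum_le_sum fun i _ => ?_
          refine (dist_sub_sub_le _ _ _ _).trans ?_
          have a1 := hL.dist_le_mul _ (hVd x hx i) _ (hVd y hy i)
          have a2 := hL.dist_le_mul x (hV1 hx) y (hV1 hy)
          rw [dist_add_right] at a1
          linarith
      _ = _ := by simp; ring
  · have hsh : ∀ᵐ x : En n, ∀ i, (x + d i ∈ ball (0 : En n) 1 → x + d i ∈ G) :=
      ae_all_iff.2 fun i => ae_shift (d i) D.ae
    filter_upwards [D.ae, hsh] with x h1 h2 hxV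
    have hxG := h1 (hV1 hxV)
    have hxi : ∀ i, x + d i ∈ G := fun i => h2 i (hVd x hxV i)
    have hev : fderiv ℝ (fun x => ∑ i ∈ s, (u (x + d i) - u x)) =ᶠ[𝓝 x]
        fun x => ∑ i ∈ s, (fderiv ℝ u (x + d i) - fderiv ℝ u x) := by
      filter_upwards [hV.mem_nhds hxV] with y hy using (hfd y hy).fderiv
    have h3 : HasFDerivAt (fun x => ∑ i ∈ s, (fderiv ℝ u (x + d i) - fderiv ℝ u x))
        (∑ i ∈ s, (D2 u (x + d i) - D2 u x)) x :=
      HasFDerivAt.fun_sum fun i _ =>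
        ((hasFDerivAt_comp_add_right (d i)).2 (D.d2 _ (hxi i)).hasFDerivAt).fun_sub (D.d2 _ hxG).hasFDerivAt
    have h4 := h3.congr_of_eventuallyEq hev
    refine ⟨h4.differentiableAt, ?_⟩
    rw [D2, h4.fderiv]
    exact D.conc s (fun i => x + d i) x (fun i _ => hxi i) hxG

/-- Sum of second difference quotients. -/
def sd {n : ℕ} (u : En n → ℝ) (b : OrthonormalBasis (Fin n) ℝ (En n)) (S : Finset (Fin n)) (h : ℝ)
    (x : En n) : ℝ :=
  ∑ k ∈ S, (u (x + h • b k) + u (x - h • b k) - 2 * u x) / h ^ 2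

theorem EKData.sd_isSub {n : ℕ} {K : ℝ} {u : En n → ℝ} {G : Set (En n)} (D : EKData K u G)
    (b : OrthonormalBasis (Fin n) ℝ (En n)) (S : Finset (Fin n)) {h r : ℝ} (y : En n) (hh : 0 < h)
    (hr : ‖y‖ + r + h ≤ 1) : IsSub K (sd u b S h) (ball y r) := by
  have hd : ∀ i : Fin n × Bool, ‖(if i.2 then h • b i.1 else -(h • b i.1))‖ = h := by
    rintro ⟨k, c⟩
    cases c <;> simp [norm_smul, abs_of_pos hh]
  have h1 := D.diffs_isSub (S ×ˢ Finset.univ)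
    (fun i => if i.2 then h • b i.1 else -(h • b i.1)) (V := ball y r) isOpen_ball
    (fun x hx => by
      rw [mem_ball, dist_eq_norm] at hx
      rw [mem_ball, dist_zero_right]
      have := norm_sub_norm_le x y
      linarith)
    (fun x hx i => by
      rw [mem_ball, dist_eq_norm] at hx
      rw [mem_ball, dist_zero_right]
      have := norm_sub_norm_le x y
      have h3 := norm_add_le x (if i.2 then h • b i.1 else -(h • b i.1))
      rw [hd] at h3
      linarith)
  have h2 := IsSub.const_affine isOpen_ball h1 (h ^ 2)⁻¹ 0 (by positivity)
  convert h2 using 1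
  ext x
  rw [sd, Finset.sum_product, Finset.mul_sum, add_zero]
  refine Finset.sum_congr rfl fun k _ => ?_
  simp
  rw [div_eq_inv_mul, ← sub_eq_add_neg]

theorem EKData.sd_bound {n : ℕ} {K : ℝ} {u : En n → ℝ} {G : Set (En n)} (D : EKData K u G) :
    ∃ W : ℝ, 0 ≤ W ∧ ∀ (b : OrthonormalBasis (Fin n) ℝ (En n)) (S : Finset (Fin n)) (h : ℝ)
      (x : En n), 0 < h → ‖x‖ + h < 1 → |sd u b S h x| ≤ W := by
  obtain ⟨L, hL⟩ := D.lip
  refine ⟨n * (2 * L), by positivity, fun b S h x hh hx => ?_⟩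
  have hxb : x ∈ ball (0 : En n) 1 := by rw [mem_ball, dist_zero_right]; linarith
  have hsub : ball x (1 - ‖x‖) ⊆ ball 0 1 := ball_subset_ball' (by rw [dist_zero_right]; linarith)
  have key : ∀ k : En n, ‖k‖ = h → |u (x + k) - u x - fderiv ℝ u x k| ≤ L * h ^ 2 := by
    intro k hk
    have := taylor_bound (u := u) (x := x) (s := 1 - ‖x‖) (ε := L) L.2 0
      (fun y hy => D.diff y (hsub hy)) (fun y hy => by
        have := hL.dist_le_mul y (hsub hy) x hxb
        rw [dist_eq_norm, dist_eq_norm] at this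
        simpa using this) (h := k) (by linarith)
    rw [hk] at this
    simpa using this
  have h1 : ∀ k ∈ S, |(u (x + h • b k) + u (x - h • b k) - 2 * u x) / h ^ 2| ≤ 2 * (L : ℝ) := by
    intro k _
    have hn : ‖h • b k‖ = h := by simp [norm_smul, abs_of_pos hh]
    have a1 := key (h • b k) hn
    have a2 := key (-(h • b k)) (by rw [norm_neg, hn])
    rw [map_neg, ← sub_eq_add_neg] at a2
    rw [abs_div, abs_of_pos (show 0 < h ^ 2 by positivity), div_le_iff₀ (by positivity)]
    rw [abs_le] at a1 a2 ⊢
    constructor <;> linarith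
  calc |sd u b S h x| ≤ ∑ k ∈ S, |(u (x + h • b k) + u (x - h • b k) - 2 * u x) / h ^ 2| :=
        Finset.abs_sum_le_sum_abs _ _
    _ ≤ ∑ k ∈ S, (2 * L : ℝ) := Finset.sum_le_sum h1
    _ = S.card * (2 * L) := by simp
    _ ≤ n * (2 * L) := by
        gcongr
        simpa using S.card_le_univ

theorem EKData.ev_diff {n : ℕ} {K : ℝ} {u : En n → ℝ} {G : Set (En n)} (D : EKData K u G)
    {x : En n} (hx : x ∈ G) : ∀ᶠ y in 𝓝 x, DifferentiableAt ℝ u y := by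
  filter_upwards [isOpen_ball.mem_nhds (D.sub hx)] with y hy using D.diff y hy

theorem EKData.sd_tendsto {n : ℕ} {K : ℝ} {u : En n → ℝ} {G : Set (En n)} (D : EKData K u G)
    (b : OrthonormalBasis (Fin n) ℝ (En n)) (S : Finset (Fin n)) {x : En n} (hx : x ∈ G)
    {h : ℕ → ℝ} (hh : ∀ j, 0 < h j) (hlim : Tendsto h atTop (𝓝 0)) :
    Tendsto (fun j => sd u b S (h j) x) atTop (𝓝 (∑ k ∈ S, D2 u x (b k) (b k))) := by
  refine tendsto_finsetSum _ fun k _ => ?_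
  rw [Metric.tendsto_atTop]
  intro ε hε
  obtain ⟨s, hs, H⟩ := taylor2 (D.ev_diff hx) (D.d2 x hx) (show 0 < ε / 4 by positivity)
  rw [Metric.tendsto_atTop] at hlim
  obtain ⟨N, hN⟩ := hlim s hs
  refine ⟨N, fun j hj => ?_⟩
  have hj1 := hN j hj
  have hp := hh j
  rw [Real.dist_eq, sub_zero, abs_of_pos hp] at hj1
  have hn : ‖h j • b k‖ = h j := by simp [norm_smul, abs_of_pos hp]
  have a1 := H (h j • b k) (by rw [hn]; exact hj1)
  have a2 := H (-(h j • b k)) (by rw [norm_neg, hn]; exact hj1)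
  rw [norm_neg, ← sub_eq_add_neg] at a2
  rw [hn] at a1 a2
  simp only [map_neg, map_smul, neg_apply, smul_apply, smul_eq_mul] at a1 a2
  rw [Real.dist_eq]
  have e : (u (x + h j • b k) + u (x - h j • b k) - 2 * u x) / h j ^ 2 - D2 u x (b k) (b k) =
      (u (x + h j • b k) + u (x - h j • b k) - 2 * u x - h j ^ 2 * D2 u x (b k) (b k)) / h j ^ 2 := by
    field_simp
  rw [e, abs_div, abs_of_pos (show 0 < h j ^ 2 by positivity), div_lt_iff₀ (by positivity)]
  have hp2 : 0 < ε * h j ^ 2 := by positivity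
  rw [abs_le] at a1 a2
  rw [abs_lt]
  constructor <;> nlinarith

/-- Approximate subsolutions with an a.e. upper bound in the limit. -/
theorem lmp_limit {n : ℕ} {K : ℝ} (hK : 0 ≤ K) {w : ℕ → En n → ℝ} {w0 : En n → ℝ} {z : En n}
    {r W m c : ℝ} (hr : 0 < r) (hc : 0 < c)
    (hw : ∀ j, IsSub K (w j) (ball z r)) (hW : ∀ j, ∀ x ∈ ball z r, w j x ≤ W)
    (hlim : ∀ᵐ x, x ∈ ball z r → Tendsto (fun j => w j x) atTop (𝓝 (w0 x)))
    (hm : ∀ᵐ x, x ∈ ball z r → w0 x ≤ m) :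
    ∀ᶠ j in atTop, ∀ x ∈ ball z (r / 2), w j x ≤ m + c := by
  obtain ⟨W', hW'0, hW'1, hW'c⟩ : ∃ W', 0 < W' ∧ W - (m + c) ≤ W' ∧ c ≤ W' :=
    ⟨max (W - (m + c)) c, lt_max_of_lt_right hc, le_max_left _ _, le_max_right _ _⟩
  set γ := c / (2 * W') with hγ
  have hγ0 : 0 < γ := by positivity
  have hγ1 : γ ≤ 1 := by rw [hγ, div_le_one (by positivity)]; linarith
  have hγW : γ * W' = c / 2 := by rw [hγ]; field_simp
  set η := ENNReal.ofReal ((γ / (8 * (K + 1))) ^ n) * (ENNReal.ofReal ((r / 2) ^ n) * volume (ball (0 : En n) 1)) with hη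
  have hη0 : 0 < η := by
    apply ENNReal.mul_pos
    · exact (ENNReal.ofReal_pos.2 (by positivity)).ne'
    · exact (ENNReal.mul_pos (ENNReal.ofReal_pos.2 (by positivity)).ne'
        (measure_ball_pos _ _ one_pos).ne').ne'
  have hcont : ∀ j, ContinuousOn (w j) (ball z r) := fun j x hx =>
    ((hw j).diff x hx).continuousAt.continuousWithinAt
  have hTM : TendstoInMeasure (volume.restrict (ball z r)) w atTop w0 := by
    have : IsFiniteMeasure (volume.restrict (ball z r)) := ⟨by
      rw [Measure.restrict_apply_univ]; exact measure_ball_lt_top⟩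
    refine tendstoInMeasure_of_tendsto_ae (fun j => (hcont j).aestronglyMeasurable measurableSet_ball) ?_
    rw [ae_restrict_iff' measurableSet_ball]
    exact hlim
  have h1 := hTM (ENNReal.ofReal (c / 2)) (ENNReal.ofReal_pos.2 (by positivity))
  have h2 := (tendsto_order.1 h1).2 η hη0
  filter_upwards [h2] with j hj x hx
  by_contra hcon
  push Not at hcon
  have hsub : ball x (r / 2) ⊆ ball z r := ball_subset_ball' (by
    rw [mem_ball] at hx; linarith)
  have h3 := IsSub.const_affine isOpen_ball ((hw j).mono hsub) 1 (-(m + c)) one_pos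
  have h4 := lmp hK hγ0 hγ1 (by positivity) hW'0 h3 (fun y hy => by
    have := hW j y (hsub hy)
    linarith) (by linarith)
  rw [vol_ball_eq x (by positivity), ← hη] at h4
  refine absurd (lt_of_le_of_lt (h4.trans ?_) hj) (lt_irrefl _)
  rw [Measure.restrict_apply' measurableSet_ball]
  apply measure_mono_ae
  filter_upwards [hm] with y hym hy
  have hyz := hsub hy.1
  have := hy.2
  have hm' := hym hyz
  rw [hγW] at this
  refine ⟨?_, hyz⟩
  change ENNReal.ofReal (c / 2) ≤ edist (w j y) (w0 y)
  rw [edist_dist]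
  apply ENNReal.ofReal_le_ofReal
  rw [Real.dist_eq]
  exact le_trans (by linarith) (le_abs_self _)

theorem conv_meas {n : ℕ} {w : ℕ → En n → ℝ} {w0 : En n → ℝ} {z : En n}
    {r c : ℝ} (hc : 0 < c) (hw : ∀ j, ContinuousOn (w j) (ball z r))
    (hlim : ∀ᵐ x, x ∈ ball z r → Tendsto (fun j => w j x) atTop (𝓝 (w0 x)))
    {η : ℝ≥0∞} (hη : 0 < η) :
    ∀ᶠ j in atTop, volume {x | x ∈ ball z r ∧ c ≤ |w j x - w0 x|} < η := by
  have hTM : TendstoInMeasure (volume.restrict (ball z r)) w atTop w0 := by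
    have : IsFiniteMeasure (volume.restrict (ball z r)) := ⟨by
      rw [Measure.restrict_apply_univ]; exact measure_ball_lt_top⟩
    refine tendstoInMeasure_of_tendsto_ae (fun j => (hw j).aestronglyMeasurable measurableSet_ball) ?_
    rw [ae_restrict_iff' measurableSet_ball]
    exact hlim
  have h1 := hTM (ENNReal.ofReal c) (ENNReal.ofReal_pos.2 hc)
  have h2 := (tendsto_order.1 h1).2 η hη
  filter_upwards [h2] with j hj
  refine lt_of_le_of_lt ?_ hj
  rw [Measure.restrict_apply' measurableSet_ball]
  refine measure_mono fun y hy => ⟨?_, hy.1⟩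
  change ENNReal.ofReal c ≤ edist (w j y) (w0 y)
  rw [edist_dist]
  apply ENNReal.ofReal_le_ofReal
  rw [Real.dist_eq]
  exact hy.2

theorem EKData.conc1 {n : ℕ} (hn : 1 ≤ n) {K : ℝ} {u : En n → ℝ} {G : Set (En n)} (D : EKData K u G)
    {x y : En n} (hx : x ∈ G) (hy : y ∈ G) : SubK K (D2 u x - D2 u y) := by
  have := D.conc {(⟨0, hn⟩, true)} (fun _ => x) y (fun _ _ => hx) hy
  rw [Finset.sum_singleton] at this
  exact this

theorem EKData.symm {n : ℕ} {K : ℝ} {u : En n → ℝ} {G : Set (En n)} (D : EKData K u G)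
    {x y : En n} (hx : x ∈ G) (hy : y ∈ G) (a b : En n) :
    (D2 u x - D2 u y) a b = (D2 u x - D2 u y) b a := by
  simp only [sub_apply]
  rw [D2_symm (D.ev_diff hx) (D.d2 x hx) a b, D2_symm (D.ev_diff hy) (D.d2 y hy) a b]

theorem ek_step {n : ℕ} (hn : 1 ≤ n) {K : ℝ} (hK : 1 ≤ K) : ∃ θ : ℝ, 0 < θ ∧ θ ≤ 1 / 2 ∧
    ∀ (u : En n → ℝ) (G : Set (En n)), EKData K u G → ∀ (y : En n) (r m : ℝ), y ∈ G → 0 < r →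
      ‖y‖ + r < 1 → 0 < m → (∀ x ∈ G, x ∈ ball y r → PB (D2 u x - D2 u y) m) →
      ∀ x ∈ G, x ∈ ball y (r / 8) → PB (D2 u x - D2 u y) ((1 - θ) * m) := by
  have hK0 : 0 ≤ K := by linarith
  obtain ⟨κ, hκ⟩ : ∃ κ : ℝ, κ = 1 / (n * K) := ⟨_, rfl⟩
  have hnK : (1 : ℝ) ≤ n * K := by
    have : (1 : ℝ) ≤ n := by exact_mod_cast hn
    nlinarith
  have hκ0 : 0 < κ := by rw [hκ]; positivity
  have hκ1 : κ ≤ 1 := by rw [hκ, div_le_one (by positivity)]; exact hnK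
  obtain ⟨μ0, hμ0⟩ : ∃ μ0 : ℝ, μ0 = ((κ / 16) / (8 * (K + 1))) ^ n := ⟨_, rfl⟩
  have hμ0p : 0 < μ0 := by rw [hμ0]; positivity
  obtain ⟨M, hM, HL⟩ := Leps n hK0 (show 0 < μ0 / 4 by positivity)
  refine ⟨min (1 / 2) (κ / (32 * M)), by positivity, min_le_left _ _, ?_⟩
  obtain ⟨θ, hθ⟩ : ∃ θ, θ = min (1 / 2) (κ / (32 * M)) := ⟨_, rfl⟩
  rw [← hθ]
  have hθ0 : 0 < θ := by rw [hθ]; positivity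
  have hθ1 : θ ≤ 1 / 2 := hθ ▸ min_le_left _ _
  have hθM : M * (2 * θ) ≤ κ / 16 := by
    have : θ ≤ κ / (32 * M) := hθ ▸ min_le_right _ _
    rw [le_div_iff₀ (by positivity)] at this
    linarith
  intro u G D y r m hyG hr hyr hm hPB x1 hx1G hx1
  intro b S
  by_contra hcon
  push Not at hcon
  -- approximations
  obtain ⟨h0, hh0⟩ : ∃ h0 : ℝ, h0 = 1 - ‖y‖ - r := ⟨_, rfl⟩
  have hh0p : 0 < h0 := by linarith
  obtain ⟨h, hh⟩ : ∃ h : ℕ → ℝ, h = fun j : ℕ => h0 * (1 / ((j : ℝ) + 1)) := ⟨_, rfl⟩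
  have hhp : ∀ j, 0 < h j := fun j => by rw [hh]; positivity
  have hhle : ∀ j, h j ≤ h0 := fun j => by
    rw [hh]
    have : 1 / ((j : ℝ) + 1) ≤ 1 := by
      rw [div_le_one (by positivity)]
      have : (0 : ℝ) ≤ j := by positivity
      linarith
    exact mul_le_of_le_one_right hh0p.le this
  have hhlim : Tendsto h atTop (𝓝 0) := by
    rw [hh]
    have := (tendsto_one_div_add_atTop_nhds_zero_nat (𝕜 := ℝ)).const_mul h0
    simpa using this
  obtain ⟨W, hW0, hW⟩ := D.sd_bound
  -- the functions
  obtain ⟨w, hw⟩ : ∃ w : Finset (Fin n) → ℕ → En n → ℝ, w = fun S j x =>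
      sd u b S (h j) x - ∑ k ∈ S, D2 u y (b k) (b k) := ⟨_, rfl⟩
  obtain ⟨w0, hw0⟩ : ∃ w0 : Finset (Fin n) → En n → ℝ, w0 = fun S x =>
      ∑ k ∈ S, (D2 u x - D2 u y) (b k) (b k) := ⟨_, rfl⟩
  have hsub : ∀ S j, IsSub K (w S j) (ball y r) := by
    intro S j
    have := IsSub.const_affine isOpen_ball (D.sd_isSub b S (h := h j) (r := r) y (hhp j)
      (by linarith [hhle j])) 1 (-∑ k ∈ S, D2 u y (b k) (b k)) one_pos
    rw [hw]
    convert this using 1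
    ext x
    ring
  have hlim : ∀ S, ∀ x ∈ G, Tendsto (fun j => w S j x) atTop (𝓝 (w0 S x)) := by
    intro S x hx
    have := (D.sd_tendsto b S hx hhp hhlim).sub_const (∑ k ∈ S, D2 u y (b k) (b k))
    rw [hw, hw0]
    simpa [Finset.sum_sub_distrib] using this
  have hyr1 : ball y r ⊆ ball 0 1 := ball_subset_ball' (by rw [dist_zero_right]; linarith)
  have haeG : ∀ᵐ x, x ∈ ball y r → x ∈ G := D.ae.mono fun x hx hxy => hx (hyr1 hxy)
  have hWb : ∀ S, ∃ W', ∀ j, ∀ x ∈ ball y r, w S j x ≤ W' := by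
    intro S
    refine ⟨W - ∑ k ∈ S, D2 u y (b k) (b k), fun j x hx => ?_⟩
    rw [hw]
    have hxr : ‖x‖ < ‖y‖ + r := by
      rw [mem_ball, dist_eq_norm] at hx
      have := norm_sub_norm_le x y
      linarith
    have := (abs_le.1 (hW b S (h j) x (hhp j) (by linarith [hhle j]))).2
    simp only
    linarith
  have hup : ∀ S, ∀ᶠ j in atTop, ∀ x ∈ ball y (r / 2), w S j x ≤ m + θ * m := by
    intro S
    obtain ⟨W', hW'⟩ := hWb S
    refine lmp_limit hK0 (w0 := w0 S) hr (by positivity) (hsub S) hW'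
      (haeG.mono fun x hx hxy => hlim S x (hx hxy)) (haeG.mono fun x hx hxy => ?_)
    rw [hw0]
    exact hPB x (hx hxy) hxy b S
  -- the radius rho
  obtain ⟨ρ, hρ⟩ : ∃ ρ : ℝ, ρ = r / 8 := ⟨_, rfl⟩
  have hρ0 : 0 < ρ := by linarith
  have hρ4 : ρ * 4 = r / 2 := by rw [hρ]; ring
  rw [← hρ] at hx1
  have hs1 : ball y ρ ⊆ ball y (r / 2) := ball_subset_ball (by linarith)
  have hs2 : ball y (r / 2) ⊆ ball y r := ball_subset_ball (by linarith)
  have hcont : ∀ S j, ContinuousOn (w S j) (ball y ρ) := fun S j x hx =>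
    ((hsub S j).diff x (hs2 (hs1 hx))).continuousAt.continuousWithinAt
  have hVp : 0 < volume (ball y ρ) := measure_ball_pos _ _ hρ0
  have hη : 0 < ENNReal.ofReal (μ0 / 4) * volume (ball y ρ) :=
    ENNReal.mul_pos (ENNReal.ofReal_pos.2 (by positivity)).ne' hVp.ne'
  have hcm : ∀ S, ∀ᶠ j in atTop, volume {x | x ∈ ball y ρ ∧ κ / 16 * m ≤ |w S j x - w0 S x|} <
      ENNReal.ofReal (μ0 / 4) * volume (ball y ρ) := fun S =>
    conv_meas (by positivity) (hcont S)
      (haeG.mono fun x hx hxy => hlim S x (hx (hs2 (hs1 hxy)))) hη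
  have hx1ev : ∀ᶠ j in atTop, (1 - θ) * m < w S j x1 := by
    refine (tendsto_order.1 (hlim S x1 hx1G)).1 _ ?_
    rw [hw0]; exact hcon
  have hyev : ∀ᶠ j in atTop, -(κ / 16 * m) < w Sᶜ j y := by
    refine (tendsto_order.1 (hlim Sᶜ y hyG)).1 _ ?_
    rw [hw0]
    have : 0 < κ / 16 * m := by positivity
    simpa using this
  obtain ⟨j, hj1, hj2, hj3, hj4, hj5, hj6⟩ :=
    ((hup S).and ((hup Sᶜ).and ((hcm S).and ((hcm Sᶜ).and (hx1ev.and hyev))))).exists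
  -- L^eps
  have hL := HL (fun x => m + θ * m - w S j x) y ρ (2 * θ * m) hρ0 (by positivity)
    (fun x hx => by rw [hρ4] at hx; have := hj1 x hx; linarith)
    (by
      have := IsSub.const_affine isOpen_ball ((hsub S j).mono hs2) 1 (-(m + θ * m)) one_pos
      rw [hρ4]
      convert this using 1
      ext x; ring) x1 hx1 (by linarith)
  -- LMP
  have hθm : θ * m ≤ 1 / 2 * m := by gcongr
  have hκm : κ * m ≤ 1 * m := by gcongr
  have hP := lmp hK0 (c := κ / 16) (by positivity) (by linarith) hρ0 (W := 2 * m) (by positivity)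
    (IsSub.const_affine isOpen_ball ((hsub Sᶜ j).mono (hs1.trans hs2)) 1 (κ / 16 * m) one_pos)
    (fun x hx => by
      have := hj2 x (hs1 hx)
      linarith) (by linarith)
  rw [← hμ0] at hP
  -- contradiction
  have hcover : volume {x | x ∈ ball y ρ ∧ -(κ / 16 * (2 * m)) < 1 * w Sᶜ j x + κ / 16 * m} ≤
      volume ({x | x ∈ ball y ρ ∧ M * (2 * θ * m) < m + θ * m - w S j x} ∪
        ({x | x ∈ ball y ρ ∧ κ / 16 * m ≤ |w S j x - w0 S x|} ∪
        {x | x ∈ ball y ρ ∧ κ / 16 * m ≤ |w Sᶜ j x - w0 Sᶜ x|})) := by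
    apply measure_mono_ae
    filter_upwards [haeG] with x hxG0 hx
    obtain ⟨hxρ, hxl⟩ := hx
    have hxr := hs2 (hs1 hxρ)
    have hxG := hxG0 hxr
    by_contra hnot
    change ¬ (_ ∨ (_ ∨ _)) at hnot
    push Not at hnot
    obtain ⟨n1, n2, n3⟩ := hnot
    have m1 : ¬ (M * (2 * θ * m) < m + θ * m - w S j x) := fun hh => n1 ⟨hxρ, hh⟩
    have m2 : ¬ (κ / 16 * m ≤ |w S j x - w0 S x|) := fun hh => n2 ⟨hxρ, hh⟩
    have m3 : ¬ (κ / 16 * m ≤ |w Sᶜ j x - w0 Sᶜ x|) := fun hh => n3 ⟨hxρ, hh⟩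
    rw [not_lt] at m1
    rw [not_le, abs_lt] at m2 m3
    have hθM' : M * (2 * θ * m) ≤ κ / 16 * m := by
      rw [← mul_assoc]; gcongr
    have hθm0 : 0 < θ * m := by positivity
    have q1 : (1 - κ / 8) * m ≤ w0 S x := by linarith
    rw [hw0] at q1
    have q2 := lin_alg hn hK (D.symm hxG hyG) (hPB x hxG hxr)
      (by
        have e : -(D2 u x - D2 u y) = D2 u y - D2 u x := by ext a b; simp
        rw [e]; exact D.conc1 hn hyG hxG) b S hκ q1
    have q3 : w0 Sᶜ x ≤ -(κ / 2 * m) := by rw [hw0]; exact q2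
    have : 0 < κ * m := by positivity
    linarith
  have hfin : volume (ball y ρ) ≠ ∞ := measure_ball_lt_top.ne
  have htot : ENNReal.ofReal μ0 * volume (ball y ρ) ≤
      ENNReal.ofReal (μ0 / 4) * volume (ball y ρ) + (ENNReal.ofReal (μ0 / 4) * volume (ball y ρ) +
        ENNReal.ofReal (μ0 / 4) * volume (ball y ρ)) := by
    refine (hP.trans hcover).trans ((measure_union_le _ _).trans (add_le_add hL ?_))
    exact (measure_union_le _ _).trans (add_le_add hj3.le hj4.le)
  rw [← add_mul, ← add_mul, ← ENNReal.ofReal_add (by positivity) (by positivity),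
    ← ENNReal.ofReal_add (by positivity) (by positivity)] at htot
  rw [ENNReal.mul_le_mul_iff_left hVp.ne' hfin, ENNReal.ofReal_le_ofReal_iff (by positivity)] at htot
  linarith

theorem exists_exponent {q : ℝ} (h1 : 1 / 2 ≤ q) (h2 : q < 1) :
    ∃ α : ℝ, 0 < α ∧ α < 1 ∧ (1 / 8 : ℝ) ^ α = q := by
  have hq : 0 < q := by linarith
  refine ⟨Real.logb (1 / 8) q, ?_, ?_, Real.rpow_logb (by norm_num) (by norm_num) hq⟩
  · exact Real.logb_pos_of_base_lt_one (by norm_num) (by norm_num) hq h2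
  · by_contra hcon
    rw [not_lt] at hcon
    have e := Real.rpow_logb (b := 1 / 8) (by norm_num) (by norm_num) hq
    have := Real.rpow_le_rpow_of_exponent_ge (x := (1 / 8 : ℝ)) (by norm_num) (by norm_num) hcon
    rw [e, Real.rpow_one] at this
    linarith

theorem ek_holder {n : ℕ} (hn : 1 ≤ n) {K : ℝ} (hK : 1 ≤ K) : ∃ α C1 : ℝ, 0 < α ∧ α < 1 ∧ 1 ≤ C1 ∧
    ∀ (u : En n → ℝ) (G : Set (En n)), EKData K u G → ∀ (y : En n) (r M : ℝ), y ∈ G → 0 < r →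
      ‖y‖ + r < 1 → 0 < M → (∀ x ∈ G, x ∈ ball y r → ‖D2 u x‖ ≤ M) →
      ∀ x ∈ G, x ∈ ball y r → ‖D2 u x - D2 u y‖ ≤ C1 * M * (‖x - y‖ / r) ^ α := by
  obtain ⟨θ, hθ0, hθ1, H⟩ := ek_step hn hK
  obtain ⟨q, hq⟩ : ∃ q, q = 1 - θ := ⟨_, rfl⟩
  have hq1 : q < 1 := by linarith
  have hq2 : 1 / 2 ≤ q := by linarith
  have hq0 : 0 < q := by linarith
  obtain ⟨α, hα0, hα1, hα⟩ := exists_exponent hq2 hq1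
  have hn1 : (1 : ℝ) ≤ n := by exact_mod_cast hn
  have hA : 1 ≤ K * (n * 2) := by nlinarith
  refine ⟨α, K * (n * 2) / q ^ 2, hα0, hα1, ?_, ?_⟩
  · rw [le_div_iff₀ (by positivity)]
    nlinarith
  intro u G D y r M hyG hr hyr hM hbd x hxG hxr
  obtain ⟨m, hm⟩ : ∃ m : ℝ, m = n * (2 * M) := ⟨_, rfl⟩
  have hm0 : 0 < m := by rw [hm]; positivity
  have hiter : ∀ k : ℕ, ∀ z ∈ G, z ∈ ball y (r * (1 / 8) ^ k) → PB (D2 u z - D2 u y) (q ^ k * m) := by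
    intro k
    induction k with
    | zero =>
      intro z hz hzr
      rw [pow_zero, mul_one] at hzr
      rw [pow_zero, one_mul, hm]
      apply PB_of_norm
      have h1 := hbd z hz hzr
      have h2 := hbd y hyG (mem_ball_self hr)
      have h3 := norm_sub_le (D2 u z) (D2 u y)
      linarith
    | succ k ih =>
      have hp : 0 < r * (1 / 8) ^ k := by positivity
      have hp1 : r * (1 / 8) ^ k ≤ r := by
        have : (1 / 8 : ℝ) ^ k ≤ 1 := pow_le_one₀ (by norm_num) (by norm_num)
        nlinarith
      have := H u G D y (r * (1 / 8) ^ k) (q ^ k * m) hyG hp (by linarith) (by positivity) ih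
      intro z hz hzr
      have h2 := this z hz (by
        rw [mem_ball] at hzr ⊢
        rw [pow_succ] at hzr
        linarith)
      convert h2 using 1
      rw [pow_succ, hq]; ring
  rcases eq_or_ne x y with rfl | hne
  · rw [show D2 u x - D2 u x = 0 by ext a b; simp]
    have h0 : ‖(0 : En n →L[ℝ] En n →L[ℝ] ℝ)‖ = 0 := ContinuousLinearMap.opNorm_zero
    refine h0.le.trans ?_
    positivity
  obtain ⟨t, ht⟩ : ∃ t, t = ‖x - y‖ / r := ⟨_, rfl⟩
  have hxy : 0 < ‖x - y‖ := by rwa [norm_pos_iff, sub_ne_zero]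
  have ht0 : 0 < t := by rw [ht]; positivity
  have ht1 : t < 1 := by
    rw [ht, div_lt_one hr]
    rwa [mem_ball, dist_eq_norm] at hxr
  obtain ⟨k, hk1, hk2⟩ := exists_nat_pow_near_of_lt_one ht0 ht1.le (show (0 : ℝ) < 1 / 8 by norm_num)
    (by norm_num)
  obtain ⟨j, hj1, hj2⟩ : ∃ j : ℕ, k ≤ j + 1 ∧ t < (1 / 8) ^ j := by
    rcases k with _ | k
    · exact ⟨0, by omega, by simpa using ht1⟩
    · refine ⟨k, le_rfl, hk2.trans_lt ?_⟩
      rw [pow_succ]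
      have : (0 : ℝ) < (1 / 8) ^ k := by positivity
      linarith
  have hx : x ∈ ball y (r * (1 / 8) ^ j) := by
    rw [mem_ball, dist_eq_norm]
    rw [ht, div_lt_iff₀ hr] at hj2
    linarith
  have hPB := hiter j x hxG hx
  have hN := PB_norm hK (D.symm hxG hyG) hPB (D.conc1 hn hxG hyG)
  have hta : q ^ (k + 1) ≤ t ^ α := by
    have : ((1 / 8 : ℝ) ^ (k + 1)) ^ α ≤ t ^ α := Real.rpow_le_rpow (by positivity) hk1.le hα0.le
    rw [← Real.rpow_pow_comm (by norm_num), hα] at this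
    exact this
  have hqj : q ^ j * q ^ 2 ≤ q ^ (k + 1) := by
    rw [← pow_add]
    exact pow_le_pow_of_le_one hq0.le hq1.le (by omega)
  rw [← ht]
  refine hN.trans ?_
  rw [div_mul_eq_mul_div, div_mul_eq_mul_div, le_div_iff₀ (by positivity), hm]
  have : q ^ j * q ^ 2 * (K * (n * 2) * M) ≤ t ^ α * (K * (n * 2) * M) :=
    mul_le_mul_of_nonneg_right (hqj.trans hta) (by positivity)
  linarith

theorem ae_lines {n : ℕ} {P : En n → Prop} (h : ∀ᵐ x, P x) (x v : En n) :
    ∀ᵐ e : En n, ∀ᵐ t : ℝ, P (x + t • v + e) := by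
  obtain ⟨N, hN1, hN2, hN3⟩ := exists_measurable_superset_of_null (ae_iff.1 h)
  have h1 : ∀ᵐ z : En n, z ∉ N := measure_eq_zero_iff_ae_notMem.1 hN3
  have h2 : ∀ t : ℝ, ∀ᵐ e : En n, x + t • v + e ∉ N := by
    intro t
    have := ae_shift (x + t • v) h1
    filter_upwards [this] with e he
    rwa [add_comm]
  have h3 : ∀ᵐ e : En n, ∀ᵐ t : ℝ, x + t • v + e ∉ N := by
    rw [Measure.ae_ae_comm]
    · exact ae_of_all _ h2
    · exact (hN2.preimage (f := fun p : En n × ℝ => x + p.2 • v + p.1) (by fun_prop)).compl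
  filter_upwards [h3] with e he
  filter_upwards [he] with t ht
  by_contra hcon
  exact ht (hN1 hcon)

theorem seg_bound {n : ℕ} {g : En n → ℝ} {U : Set (En n)} (hU : Convex ℝ U)
    {L : ℝ≥0} (hg : LipschitzOnWith L g U) {c : ℝ} {x v : En n} (hx : x ∈ U) (hy : x + v ∈ U)
    (h : ∀ᵐ t : ℝ, x + t • v ∈ U → DifferentiableAt ℝ g (x + t • v) ∧ ‖fderiv ℝ g (x + t • v)‖ ≤ c) :
    |g (x + v) - g x| ≤ c * ‖v‖ := by
  have hmem : ∀ t ∈ Icc (0 : ℝ) 1, x + t • v ∈ U := fun t ht => by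
    have := hU.add_smul_mem hx hy ht
    exact this
  have hlip : LipschitzOnWith (L * ‖v‖₊) (fun t : ℝ => g (x + t • v)) (uIcc 0 1) := by
    rw [uIcc_of_le zero_le_one]
    refine LipschitzOnWith.of_dist_le_mul fun s hs t ht => ?_
    refine (hg.dist_le_mul _ (hmem s hs) _ (hmem t ht)).trans ?_
    rw [dist_eq_norm (x + s • v), add_sub_add_left_eq_sub, ← sub_smul, norm_smul, Real.dist_eq,
      Real.norm_eq_abs]
    push_cast
    rw [mul_assoc, mul_comm ‖v‖]
  have hF := hlip.absolutelyContinuousOnInterval.integral_deriv_eq_sub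
  have hb : ‖∫ t in (0 : ℝ)..1, deriv (fun t : ℝ => g (x + t • v)) t‖ ≤ c * ‖v‖ * |1 - 0| := by
    refine intervalIntegral.norm_integral_le_of_norm_le_const_ae ?_
    filter_upwards [h] with t ht ht2
    rw [uIoc_of_le zero_le_one] at ht2
    obtain ⟨d1, d2⟩ := ht (hmem t ⟨ht2.1.le, ht2.2⟩)
    have hl : HasDerivAt (fun t : ℝ => x + t • v) v t := by
      simpa using ((hasDerivAt_id t).smul_const v).const_add x
    have := (d1.hasFDerivAt.comp_hasDerivAt t hl).deriv
    change deriv (fun t : ℝ => g (x + t • v)) t = _ at this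
    rw [this]
    exact ((fderiv ℝ g (x + t • v)).le_opNorm v).trans (by gcongr)
  rw [hF] at hb
  simpa using hb

theorem ae_lip {n : ℕ} {g : En n → ℝ} {U : Set (En n)} (hUo : IsOpen U) (hU : Convex ℝ U)
    {L : ℝ≥0} (hg : LipschitzOnWith L g U) {c : ℝ}
    (h : ∀ᵐ z, z ∈ U → DifferentiableAt ℝ g z ∧ ‖fderiv ℝ g z‖ ≤ c) {x y : En n} (hx : x ∈ U)
    (hy : y ∈ U) : |g y - g x| ≤ c * ‖y - x‖ := by
  have hlines := ae_lines h x (y - x)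
  have hev : ∀ᶠ e : En n in 𝓝 0, x + e ∈ U ∧ y + e ∈ U := by
    have c1 : Tendsto (fun e : En n => x + e) (𝓝 0) (𝓝 x) := by
      have : Continuous fun e : En n => x + e := by fun_prop
      simpa using this.tendsto 0
    have c2 : Tendsto (fun e : En n => y + e) (𝓝 0) (𝓝 y) := by
      have : Continuous fun e : En n => y + e := by fun_prop
      simpa using this.tendsto 0
    exact (c1.eventually (hUo.mem_nhds hx)).and (c2.eventually (hUo.mem_nhds hy))
  have hfreq : ∃ᶠ e : En n in 𝓝 0, |g (y + e) - g (x + e)| ≤ c * ‖y - x‖ := by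
    intro hcon
    have hall : ∀ᵐ e : En n, ¬ (x + e ∈ U ∧ y + e ∈ U ∧ ¬ |g (y + e) - g (x + e)| ≤ c * ‖y - x‖) := by
      filter_upwards [hlines] with e he ⟨q1, q2, q3⟩
      apply q3
      have e1 : y + e = x + e + (y - x) := by abel
      rw [e1] at q2 ⊢
      refine seg_bound hU hg q1 q2 ?_
      filter_upwards [he] with t ht
      rwa [add_right_comm]
    have hmem : {e : En n | x + e ∈ U ∧ y + e ∈ U ∧ ¬ |g (y + e) - g (x + e)| ≤ c * ‖y - x‖} ∈ 𝓝 0 := by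
      filter_upwards [hev, hcon] with e h1 h2 using ⟨h1.1, h1.2, h2⟩
    have := Measure.measure_pos_of_mem_nhds volume hmem
    rw [ae_iff] at hall
    simp only [not_not] at hall
    exact this.ne' hall
  have hc1 : ContinuousAt (fun e : En n => |g (y + e) - g (x + e)|) 0 := by
    have gx : ContinuousAt g (x + 0) := by
      rw [add_zero]; exact hg.continuousOn.continuousAt (hUo.mem_nhds hx)
    have gy : ContinuousAt g (y + 0) := by
      rw [add_zero]; exact hg.continuousOn.continuousAt (hUo.mem_nhds hy)
    have c1 : ContinuousAt (fun e : En n => g (x + e)) 0 :=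
      gx.comp (f := fun e : En n => x + e) (by fun_prop)
    have c2 : ContinuousAt (fun e : En n => g (y + e)) 0 :=
      gy.comp (f := fun e : En n => y + e) (by fun_prop)
    exact (c2.sub c1).abs
  have : |g (y + 0) - g (x + 0)| ≤ c * ‖y - x‖ := le_of_tendsto_of_frequently hc1 hfreq
  simpa using this

theorem EKData.lin_rem {n : ℕ} {K : ℝ} {u : En n → ℝ} {G : Set (En n)} (D : EKData K u G)
    {x : En n} {s c : ℝ} (hc0 : 0 ≤ c) (hs : 0 < s) (hsub : ball x s ⊆ ball 0 1)
    (B : En n →L[ℝ] En n →L[ℝ] ℝ)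
    (hc : ∀ z ∈ G, z ∈ ball x s → ‖D2 u z - B‖ ≤ c) {y : En n} (hy : y ∈ ball x s) :
    ‖fderiv ℝ u y - fderiv ℝ u x - B (y - x)‖ ≤ c * ‖y - x‖ := by
  obtain ⟨L, hL⟩ := D.lip
  refine ContinuousLinearMap.opNorm_le_bound _ (by positivity) fun e => ?_
  have hlip : LipschitzOnWith (L * ‖e‖₊ + ‖B‖₊ * ‖e‖₊) (fun z => fderiv ℝ u z e - B z e) (ball x s) := by
    refine LipschitzOnWith.of_dist_le_mul fun a ha b hb => ?_
    have h1 := hL.dist_le_mul a (hsub ha) b (hsub hb)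
    rw [dist_eq_norm] at h1
    have h2 := (fderiv ℝ u a - fderiv ℝ u b).le_opNorm e
    have h3 := B.le_opNorm₂ (a - b) e
    rw [Real.dist_eq]
    have e1 : fderiv ℝ u a e - B a e - (fderiv ℝ u b e - B b e) =
      (fderiv ℝ u a - fderiv ℝ u b) e - B (a - b) e := by
      simp only [sub_apply, map_sub]; ring
    rw [e1]
    refine (abs_sub _ _).trans ?_
    rw [Real.norm_eq_abs] at h2 h3
    push_cast
    rw [← dist_eq_norm] at h3
    calc _ ≤ L * dist a b * ‖e‖ + ‖B‖ * dist a b * ‖e‖ := by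
          refine add_le_add (h2.trans ?_) h3
          gcongr
      _ = _ := by ring
  have hd : ∀ᵐ z, z ∈ ball x s → DifferentiableAt ℝ (fun z => fderiv ℝ u z e - B z e) z ∧
      ‖fderiv ℝ (fun z => fderiv ℝ u z e - B z e) z‖ ≤ c * ‖e‖ := by
    filter_upwards [D.ae] with z hz hzs
    have hzG := hz (hsub hzs)
    have hd := (D.d2 z hzG).hasFDerivAt
    have h1 : HasFDerivAt (fun z => fderiv ℝ u z e) ((ContinuousLinearMap.apply ℝ ℝ e).comp (D2 u z)) z :=
      (ContinuousLinearMap.apply ℝ ℝ e).hasFDerivAt.comp z hd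
    have h2 : HasFDerivAt (fun z => B z e) ((ContinuousLinearMap.apply ℝ ℝ e).comp B) z :=
      (ContinuousLinearMap.apply ℝ ℝ e).hasFDerivAt.comp z B.hasFDerivAt
    have h3 := h1.sub h2
    change HasFDerivAt (fun z => fderiv ℝ u z e - B z e) _ z at h3
    refine ⟨h3.differentiableAt, ?_⟩
    rw [h3.fderiv]
    refine ContinuousLinearMap.opNorm_le_bound _ (by positivity) fun w => ?_
    have h4 := (D2 u z - B).le_opNorm₂ w e
    have h5 := hc z hzG hzs
    have e2 : ((ContinuousLinearMap.apply ℝ ℝ e).comp (D2 u z) -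
      (ContinuousLinearMap.apply ℝ ℝ e).comp B) w = (D2 u z - B) w e := by
      simp
    rw [e2]
    refine h4.trans ?_
    calc _ ≤ c * ‖w‖ * ‖e‖ := by gcongr
      _ = _ := by ring
  have := ae_lip isOpen_ball (convex_ball x s) hlip hd (mem_ball_self hs) hy
  have e1 : fderiv ℝ u y e - B y e - (fderiv ℝ u x e - B x e) =
      (fderiv ℝ u y - fderiv ℝ u x - B (y - x)) e := by
    simp only [sub_apply, map_sub]; ring
  rw [e1] at this
  rw [Real.norm_eq_abs]
  linarith

theorem EKData.taylor {n : ℕ} {K : ℝ} {u : En n → ℝ} {G : Set (En n)} (D : EKData K u G)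
    {x : En n} {s c : ℝ} (hc0 : 0 ≤ c) (hs : 0 < s) (hsub : ball x s ⊆ ball 0 1)
    (B : En n →L[ℝ] En n →L[ℝ] ℝ)
    (hc : ∀ z ∈ G, z ∈ ball x s → ‖D2 u z - B‖ ≤ c) {h : En n} (hh : ‖h‖ < s) :
    |u (x + h) - u x - fderiv ℝ u x h - B h h / 2| ≤ c * ‖h‖ ^ 2 :=
  taylor_bound hc0 B (fun y hy => D.diff y (hsub hy))
    (fun _ hy => D.lin_rem hc0 hs hsub B hc hy) hh

theorem exists_scale {n : ℕ} {e : En n} (he : e ≠ 0) {t : ℝ} (ht : 0 < t) :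
    ∃ a : ℝ, 0 < a ∧ ‖a • e‖ = t ∧ a * ‖e‖ = t := by
  have h : 0 < ‖e‖ := norm_pos_iff.2 he
  have h2 : t / ‖e‖ * ‖e‖ = t := by field_simp
  refine ⟨t / ‖e‖, by positivity, ?_, h2⟩
  rw [norm_smul, Real.norm_eq_abs, abs_of_pos (by positivity), h2]

theorem EKData.hess_interp {n : ℕ} {K : ℝ} {u : En n → ℝ} {G : Set (En n)} (D : EKData K u G)
    {x : En n} (hx : x ∈ G) {s c K0 : ℝ} (hc0 : 0 ≤ c) (hs : 0 < s) (hsub : ball x s ⊆ ball 0 1)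
    (hc : ∀ z ∈ G, z ∈ ball x s → ‖D2 u z - D2 u x‖ ≤ c)
    (hK0 : ∀ z ∈ ball (0 : En n) 1, |u z| ≤ K0) :
    ‖D2 u x‖ ≤ 16 * K0 / s ^ 2 + 2 * c := by
  have hK : 0 ≤ K0 := (abs_nonneg _).trans (hK0 x (D.sub hx))
  refine bilin_norm_le (by positivity) (D2_symm (D.ev_diff hx) (D.d2 x hx)) fun e => ?_
  rcases eq_or_ne e 0 with rfl | he
  · simp
  obtain ⟨a, ha, h1, h2⟩ := exists_scale he (show 0 < s / 2 by positivity)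
  have hlt : ‖a • e‖ < s := by rw [h1]; linarith
  have hlt' : ‖-(a • e)‖ < s := by rwa [norm_neg]
  have t1 := D.taylor hc0 hs hsub (D2 u x) hc hlt
  have t2 := D.taylor hc0 hs hsub (D2 u x) hc hlt'
  have b1 := hK0 (x + a • e) (hsub (by simpa [mem_ball, dist_eq_norm] using hlt))
  have b2 := hK0 (x + -(a • e)) (hsub (by simpa [mem_ball, dist_eq_norm] using hlt))
  have b3 := hK0 x (D.sub hx)
  rw [norm_neg, h1] at t2
  rw [h1] at t1
  have e1 : D2 u x (a • e) (a • e) = a ^ 2 * D2 u x e e := by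
    rw [map_smul]
    simp only [smul_apply, map_smul, smul_eq_mul]; ring
  have e2 : D2 u x (-(a • e)) (-(a • e)) = a ^ 2 * D2 u x e e := by
    rw [← e1, map_neg]
    simp only [neg_apply, map_neg, neg_neg]
  rw [e1] at t1
  rw [e2, map_neg] at t2
  have hmain : a ^ 2 * |D2 u x e e| ≤ 4 * K0 + 2 * c * (s / 2) ^ 2 := by
    rw [← abs_of_pos (show 0 < a ^ 2 by positivity), ← abs_mul]
    rw [abs_le] at t1 t2 b1 b2 b3 ⊢
    constructor <;> linarith [t1.1, t1.2, t2.1, t2.2, b1.1, b1.2, b2.1, b2.2, b3.1, b3.2]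
  have e3 : (16 * K0 / s ^ 2 + 2 * c) * ‖e‖ ^ 2 * a ^ 2 = 4 * K0 + 2 * c * (s / 2) ^ 2 := by
    have : ‖e‖ ^ 2 * a ^ 2 = (s / 2) ^ 2 := by rw [← h2]; ring
    rw [mul_assoc, this]
    field_simp
    ring
  refine le_of_mul_le_mul_right ?_ (show 0 < a ^ 2 by positivity)
  linarith

theorem ek_c2 {n : ℕ} (hn : 1 ≤ n) {K : ℝ} (hK : 1 ≤ K) : ∃ C2 : ℝ, 0 < C2 ∧
    ∀ (u : En n → ℝ) (G : Set (En n)), EKData K u G → ∀ K0 : ℝ,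
      (∀ z ∈ ball (0 : En n) 1, |u z| ≤ K0) → ∀ x ∈ G, (1 - ‖x‖) ^ 2 * ‖D2 u x‖ ≤ C2 * K0 := by
  obtain ⟨α, C1, hα0, hα1, hC1, H⟩ := ek_holder hn hK
  obtain ⟨σ, hσ⟩ : ∃ σ : ℝ, σ = (1 / (16 * C1)) ^ (1 / α) := ⟨_, rfl⟩
  have hC1p : 0 < C1 := by linarith
  have hσ0 : 0 < σ := by rw [hσ]; positivity
  have hσα : σ ^ α = 1 / (16 * C1) := by
    rw [hσ, ← Real.rpow_mul (by positivity), one_div_mul_cancel hα0.ne', Real.rpow_one]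
  have hσ1 : σ ≤ 1 := by
    rw [hσ]
    refine Real.rpow_le_one (by positivity) ?_ (by positivity)
    rw [div_le_one (by positivity)]; linarith
  refine ⟨128 / σ ^ 2, by positivity, ?_⟩
  intro u G D K0 hK0
  have key : ∀ Q : ℝ, 0 < Q → (∀ x ∈ G, (1 - ‖x‖) ^ 2 * ‖D2 u x‖ ≤ Q) →
      ∀ x ∈ G, (1 - ‖x‖) ^ 2 * ‖D2 u x‖ ≤ 64 * K0 / σ ^ 2 + Q / 2 := by
    intro Q hQ hbd x hx
    obtain ⟨d, hd⟩ : ∃ d, d = 1 - ‖x‖ := ⟨_, rfl⟩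
    have hx1 : ‖x‖ < 1 := by simpa using D.sub hx
    have hd0 : 0 < d := by linarith
    have hM : ∀ z ∈ G, z ∈ ball x (d / 2) → ‖D2 u z‖ ≤ 4 * Q / d ^ 2 := by
      intro z hz hzx
      have h1 := hbd z hz
      rw [mem_ball, dist_eq_norm] at hzx
      have h2 : ‖z‖ ≤ ‖x‖ + ‖z - x‖ := by
        have := norm_add_le x (z - x)
        rwa [add_sub_cancel] at this
      have h3 : (d / 2) ^ 2 ≤ (1 - ‖z‖) ^ 2 := by
        apply pow_le_pow_left₀ (by positivity); linarith
      have h4 : (d / 2) ^ 2 * ‖D2 u z‖ ≤ Q :=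
        (mul_le_mul_of_nonneg_right h3 (norm_nonneg (D2 u z))).trans h1
      rw [le_div_iff₀ (by positivity)]
      linarith
    have h1 := H u G D x (d / 2) (4 * Q / d ^ 2) hx (by positivity) (by linarith) (by positivity) hM
    have hss : σ * (d / 2) ≤ d / 2 := by nlinarith
    have h2 := D.hess_interp hx (s := σ * (d / 2)) (c := C1 * (4 * Q / d ^ 2) * σ ^ α)
      (by positivity) (by positivity) ?_ ?_ hK0
    · rw [← hd]
      calc d ^ 2 * ‖D2 u x‖ ≤ d ^ 2 * (16 * K0 / (σ * (d / 2)) ^ 2 + 2 * (C1 * (4 * Q / d ^ 2) * σ ^ α)) := by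
            gcongr
        _ = _ := by
            rw [hσα]; field_simp; ring
    · intro z hz
      rw [mem_ball, dist_eq_norm] at hz
      rw [mem_ball, dist_zero_right]
      have := norm_add_le x (z - x)
      rw [add_sub_cancel] at this
      linarith
    · intro z hz hzs
      refine (h1 z hz (ball_subset_ball hss hzs)).trans ?_
      rw [mem_ball, dist_eq_norm] at hzs
      have : ‖z - x‖ / (d / 2) ≤ σ := by
        rw [div_le_iff₀ (by positivity)]; exact hzs.le
      gcongr
  have hbdd : ∃ B, ∀ x ∈ G, (1 - ‖x‖) ^ 2 * ‖D2 u x‖ ≤ B := by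
    obtain ⟨L, hL⟩ := D.lip
    refine ⟨L, fun x hx => ?_⟩
    have h1 : ‖D2 u x‖ ≤ L := norm_fderiv_le_of_lipschitzOn ℝ (isOpen_ball.mem_nhds (D.sub hx)) hL
    have hx1 : ‖x‖ < 1 := by simpa using D.sub hx
    have h2 : (1 - ‖x‖) ^ 2 ≤ 1 := pow_le_one₀ (by linarith) (by linarith [norm_nonneg x])
    calc _ ≤ 1 * (L : ℝ) := mul_le_mul h2 h1 (norm_nonneg (D2 u x)) zero_le_one
      _ = _ := one_mul _
  intro x hx
  have hKp : 0 ≤ K0 := (abs_nonneg _).trans (hK0 x (D.sub hx))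
  obtain ⟨B, hB⟩ := hbdd
  obtain ⟨S, hS⟩ : ∃ S : Set ℝ, S = (fun x => (1 - ‖x‖) ^ 2 * ‖D2 u x‖) '' G := ⟨_, rfl⟩
  have hSb : BddAbove S := ⟨B, by rw [hS]; rintro _ ⟨z, hz, rfl⟩; exact hB z hz⟩
  have hQ : ∀ x ∈ G, (1 - ‖x‖) ^ 2 * ‖D2 u x‖ ≤ sSup S :=
    fun z hz => le_csSup hSb (by rw [hS]; exact mem_image_of_mem _ hz)
  rcases le_or_gt (sSup S) 0 with h0 | h0
  · exact (hQ x hx).trans (h0.trans (by positivity))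
  have h2 : sSup S ≤ 64 * K0 / σ ^ 2 + sSup S / 2 := by
    refine csSup_le ?_ ?_
    · rw [hS]; exact ⟨_, mem_image_of_mem _ hx⟩
    · intro b hb
      rw [hS] at hb
      obtain ⟨z, hz, rfl⟩ := hb
      exact key _ h0 hQ z hz
  have e : 128 / σ ^ 2 * K0 = 2 * (64 * K0 / σ ^ 2) := by ring
  rw [e]
  linarith [hQ x hx]

theorem ek_main {n : ℕ} (hn : 1 ≤ n) {K : ℝ} (hK : 1 ≤ K) : ∃ α C : ℝ, 0 < α ∧ α < 1 ∧ 1 ≤ C ∧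
    ∀ (u : En n → ℝ) (G : Set (En n)), EKData K u G → ∀ K0 : ℝ,
      (∀ z ∈ ball (0 : En n) 1, |u z| ≤ K0) →
      (∀ x ∈ ball (0 : En n) (1 / 2), ‖fderiv ℝ u x‖ ≤ C * K0) ∧
      (∀ x ∈ G, x ∈ ball (0 : En n) (1 / 2) → ‖D2 u x‖ ≤ C * K0) ∧
      (∀ x ∈ G, x ∈ ball (0 : En n) (1 / 2) → ∀ y ∈ G, y ∈ ball (0 : En n) (1 / 2) →
        ‖D2 u x - D2 u y‖ ≤ C * K0 * ‖x - y‖ ^ α) := by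
  obtain ⟨α, C1, hα0, hα1, hC1, H⟩ := ek_holder hn hK
  obtain ⟨C2, hC2, H2⟩ := ek_c2 hn hK
  have hC1p : 0 < C1 := by linarith
  obtain ⟨m, hm⟩ : ∃ m, m = 16 * C2 := ⟨_, rfl⟩
  have hm0 : 0 < m := by rw [hm]; positivity
  refine ⟨α, 16 + m + 8 * C1 * m, hα0, hα1, ?_, ?_⟩
  · have : 0 < 8 * C1 * m := by positivity
    linarith
  intro u G D K0 hK0
  have hKp : 0 ≤ K0 := (abs_nonneg _).trans (hK0 0 (by simp))
  have hM : ∀ x ∈ G, ‖x‖ < 3 / 4 → ‖D2 u x‖ ≤ m * K0 := by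
    intro x hx hx34
    have h1 := H2 u G D K0 hK0 x hx
    have h3 : (1 / 4 : ℝ) ^ 2 ≤ (1 - ‖x‖) ^ 2 := by
      apply pow_le_pow_left₀ (by positivity); linarith
    have h4 : (1 / 4 : ℝ) ^ 2 * ‖D2 u x‖ ≤ C2 * K0 :=
      (mul_le_mul_of_nonneg_right h3 (norm_nonneg (D2 u x))).trans h1
    rw [hm]
    linarith
  have hmK : 0 ≤ m * K0 := by positivity
  have hcmK : 0 ≤ C1 * m * K0 := by positivity
  have hnear : ∀ x ∈ ball (0 : En n) (1 / 2), ∀ z ∈ ball x (1 / 4), ‖z‖ < 3 / 4 := by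
    intro x hx z hz
    rw [mem_ball, dist_eq_norm] at hz
    rw [mem_ball, dist_zero_right] at hx
    have := norm_add_le x (z - x)
    rw [add_sub_cancel] at this
    linarith
  refine ⟨?_, ?_, ?_⟩
  · intro x hx
    have hsub : ball x (1 / 4) ⊆ ball 0 1 := fun z hz => by
      rw [mem_ball, dist_zero_right]
      linarith [hnear x hx z hz]
    refine ContinuousLinearMap.opNorm_le_bound _ (by positivity) fun e => ?_
    rcases eq_or_ne e 0 with rfl | he
    · simp
    obtain ⟨a, ha, h1, h2⟩ := exists_scale he (show (0 : ℝ) < 1 / 8 by norm_num)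
    have hlt : ‖a • e‖ < 1 / 4 := by rw [h1]; norm_num
    have t1 := D.taylor hmK (by norm_num) hsub 0 (fun z hz hzs => by
      have e0 : D2 u z - 0 = D2 u z := by ext a b; simp
      rw [e0]
      exact hM z hz (hnear x hx z hzs)) hlt
    have b1 := hK0 (x + a • e) (hsub (by simpa [mem_ball, dist_eq_norm] using hlt))
    have b3 := hK0 x (hsub (mem_ball_self (by norm_num)))
    rw [h1, map_smul] at t1
    simp only [zero_apply, smul_eq_mul, zero_div, sub_zero] at t1
    have hmain : a * |fderiv ℝ u x e| ≤ 2 * K0 + m * K0 * (1 / 8) ^ 2 := by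
      rw [← abs_of_pos ha, ← abs_mul]
      rw [abs_le] at t1 b1 b3 ⊢
      constructor <;> linarith [t1.1, t1.2, b1.1, b1.2, b3.1, b3.2]
    rw [Real.norm_eq_abs]
    refine le_of_mul_le_mul_left ?_ ha
    have e3 : a * ((16 + m + 8 * C1 * m) * K0 * ‖e‖) = (16 + m + 8 * C1 * m) * K0 * (1 / 8) := by
      rw [← h2]; ring
    rw [e3]
    linarith
  · intro x hx hxb
    rw [mem_ball, dist_zero_right] at hxb
    have := hM x hx (by linarith)
    linarith
  · intro x hx hxb y hy hyb
    have hx1 : ‖D2 u x‖ ≤ m * K0 := hM x hx (by rw [mem_ball, dist_zero_right] at hxb; linarith)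
    have hy1 : ‖D2 u y‖ ≤ m * K0 := hM y hy (by rw [mem_ball, dist_zero_right] at hyb; linarith)
    have h2 : ‖D2 u x - D2 u y‖ ≤ 2 * (m * K0) := by
      have := norm_sub_le (D2 u x) (D2 u y)
      linarith
    have h4 : (4 : ℝ) ^ α ≤ 4 := by
      have := Real.rpow_le_rpow_of_exponent_le (x := (4 : ℝ)) (by norm_num) hα1.le
      rwa [Real.rpow_one] at this
    have hp : 0 ≤ ‖x - y‖ ^ α := by positivity
    have e4 : (‖x - y‖ / (1 / 4)) ^ α = ‖x - y‖ ^ α * 4 ^ α := by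
      rw [← Real.mul_rpow (norm_nonneg _) (by norm_num)]
      congr 1; ring
    have fin : 4 * (C1 * m * K0) * ‖x - y‖ ^ α ≤ (16 + m + 8 * C1 * m) * K0 * ‖x - y‖ ^ α := by
      apply mul_le_mul_of_nonneg_right _ hp
      linarith
    have fin2 : 8 * (C1 * m * K0) * ‖x - y‖ ^ α ≤ (16 + m + 8 * C1 * m) * K0 * ‖x - y‖ ^ α := by
      apply mul_le_mul_of_nonneg_right _ hp
      linarith
    rcases hmK.eq_or_lt with hz | hpos
    · rw [← hz] at h2
      refine h2.trans ?_
      have : 0 ≤ (16 + m + 8 * C1 * m) * K0 * ‖x - y‖ ^ α := by positivity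
      linarith
    rcases lt_or_ge ‖x - y‖ (1 / 4) with hlt | hge
    · rw [mem_ball, dist_zero_right] at hyb
      have := H u G D y (1 / 4) (m * K0) hy (by norm_num) (by linarith) hpos
        (fun z hz hzs => hM z hz (hnear y (by simpa using hyb) z hzs)) x hx
        (by rw [mem_ball, dist_eq_norm]; exact hlt)
      refine this.trans (le_trans ?_ fin)
      rw [e4]
      have : C1 * m * K0 * ‖x - y‖ ^ α * 4 ^ α ≤ C1 * m * K0 * ‖x - y‖ ^ α * 4 := by gcongr
      linarith
    · refine h2.trans (le_trans ?_ fin2)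
      have h5 : (1 : ℝ) ≤ (‖x - y‖ / (1 / 4)) ^ α := by
        apply Real.one_le_rpow _ hα0.le
        rw [le_div_iff₀ (by norm_num)]; linarith
      rw [e4] at h5
      have h6 : 1 ≤ ‖x - y‖ ^ α * 4 := h5.trans (by gcongr)
      have h7 : m * K0 ≤ C1 * m * K0 := by nlinarith
      nlinarith

/-- Limit extension of a Hölder function. -/
theorem holder_extend {n : ℕ} {E : Type*} [NormedAddCommGroup E] [CompleteSpace E] [Inhabited E]
    {f : En n → E} {S : Set (En n)} {A α : ℝ} (hα : 0 < α) (h1 : ∀ x ∈ S, ‖f x‖ ≤ A)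
    (h2 : ∀ x ∈ S, ∀ y ∈ S, ‖f x - f y‖ ≤ A * ‖x - y‖ ^ α) :
    ∃ g : En n → E, (∀ x ∈ S, g x = f x) ∧ (∀ x ∈ closure S, ‖g x‖ ≤ A) ∧
      (∀ x ∈ closure S, ∀ y ∈ closure S, ‖g x - g y‖ ≤ A * ‖x - y‖ ^ α) := by
  have hpt : ∀ x y : En n, Tendsto (fun p : En n × En n => A * ‖p.1 - p.2‖ ^ α)
      (𝓝[S] x ×ˢ 𝓝[S] y) (𝓝 (A * ‖x - y‖ ^ α)) := by
    intro x y
    have hc : Continuous (fun p : En n × En n => A * ‖p.1 - p.2‖ ^ α) := by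
      refine continuous_const.mul (Continuous.rpow_const (by fun_prop) fun _ => Or.inr hα.le)
    refine (hc.tendsto (x, y)).mono_left ?_
    rw [nhds_prod_eq]
    exact Filter.prod_mono nhdsWithin_le_nhds nhdsWithin_le_nhds
  have hS2 : ∀ x y : En n, ∀ᶠ p : En n × En n in 𝓝[S] x ×ˢ 𝓝[S] y, p.1 ∈ S ∧ p.2 ∈ S := by
    intro x y
    exact prod_mem_prod self_mem_nhdsWithin self_mem_nhdsWithin
  have hlim : ∀ x ∈ closure S, Tendsto f (𝓝[S] x) (𝓝 (limUnder (𝓝[S] x) f)) := by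
    intro x hx
    have hne : (𝓝[S] x).NeBot := mem_closure_iff_nhdsWithin_neBot.1 hx
    apply tendsto_nhds_limUnder
    rw [← cauchy_map_iff_exists_tendsto, cauchy_map_iff]
    refine ⟨hne, ?_⟩
    rw [Metric.uniformity_eq_comap_nhds_zero, tendsto_comap_iff]
    have h0 := hpt x x
    rw [sub_self, norm_zero, Real.zero_rpow hα.ne', mul_zero] at h0
    refine squeeze_zero' (Eventually.of_forall fun p => dist_nonneg) ?_ h0
    filter_upwards [hS2 x x] with p hp
    change dist (f p.1) (f p.2) ≤ _
    rw [dist_eq_norm]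
    exact h2 _ hp.1 _ hp.2
  refine ⟨fun x => limUnder (𝓝[S] x) f, ?_, ?_, ?_⟩
  · intro x hx
    have t1 := (hlim x (subset_closure hx)).mono_left (pure_le_nhdsWithin hx)
    exact tendsto_nhds_unique t1 (tendsto_pure_nhds f x)
  · intro x hx
    have hne : (𝓝[S] x).NeBot := mem_closure_iff_nhdsWithin_neBot.1 hx
    refine le_of_tendsto (hlim x hx).norm ?_
    filter_upwards [self_mem_nhdsWithin] with y hy using h1 y hy
  · intro x hx y hy
    have hne : (𝓝[S] x).NeBot := mem_closure_iff_nhdsWithin_neBot.1 hx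
    have hne' : (𝓝[S] y).NeBot := mem_closure_iff_nhdsWithin_neBot.1 hy
    have t1 : Tendsto (fun p : En n × En n => ‖f p.1 - f p.2‖) (𝓝[S] x ×ˢ 𝓝[S] y) _ :=
      (((hlim x hx).comp tendsto_fst).sub ((hlim y hy).comp tendsto_snd)).norm
    refine le_of_tendsto_of_tendsto t1 (hpt x y) ?_
    filter_upwards [hS2 x y] with p hp using h2 _ hp.1 _ hp.2

/-- Matrix of a bilinear form. -/
def mx {n : ℕ} (X : En n →L[ℝ] En n →L[ℝ] ℝ) : Mat n :=
  Matrix.of fun i j => X (EuclideanSpace.single j 1) (EuclideanSpace.single i 1)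

theorem En_expand {n : ℕ} (v : En n) : v = ∑ i, v i • EuclideanSpace.single i (1 : ℝ) := by
  have := (EuclideanSpace.basisFun (Fin n) ℝ).sum_repr v
  simpa using this.symm

theorem mx_apply {n : ℕ} (X : En n →L[ℝ] En n →L[ℝ] ℝ) (y v : En n) :
    dotProduct (y : Fin n → ℝ) (Matrix.mulVec (mx X) (v : Fin n → ℝ)) = X v y := by
  have e1 : X v y = ∑ i, y i * ∑ j, v j * X (EuclideanSpace.single j 1) (EuclideanSpace.single i 1) := by
    conv_lhs => rw [En_expand y]
    rw [map_sum]
    refine Finset.sum_congr rfl fun i _ => ?_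
    rw [map_smul, smul_eq_mul]
    congr 1
    conv_lhs => rw [En_expand v]
    rw [map_sum, sum_apply]
    refine Finset.sum_congr rfl fun j _ => ?_
    rw [map_smul]
    rfl
  rw [e1]
  simp only [Matrix.mulVec, dotProduct, mx, Matrix.of_apply]
  refine Finset.sum_congr rfl fun i _ => ?_
  rw [Finset.sum_congr rfl fun j _ => mul_comm _ _]

theorem opNorm_mx {n : ℕ} (X : En n →L[ℝ] En n →L[ℝ] ℝ) : opNorm (mx X) ≤ ‖X‖ := by
  refine ContinuousLinearMap.opNorm_le_bound _ (norm_nonneg X) fun v => ?_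
  obtain ⟨w, hw⟩ : ∃ w, w = Matrix.toEuclideanCLM (𝕜 := ℝ) (mx X) v := ⟨_, rfl⟩
  have h1 : ‖w‖ ^ 2 = X v w := by
    rw [← real_inner_self_eq_norm_sq]
    conv_lhs => rw [hw]
    rw [← hw, hw]
    rw [Matrix.inner_toEuclideanCLM, ← hw]
    exact mx_apply X w v
  rw [← hw]
  have h2 := X.le_opNorm₂ v w
  rw [← h1, Real.norm_eq_abs, abs_of_nonneg (by positivity)] at h2
  rcases (norm_nonneg w).eq_or_lt with h0 | h0
  · rw [← h0]; positivity
  · refine le_of_mul_le_mul_right ?_ h0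
    rw [← sq]; exact h2

theorem qf_le_opNorm {n : ℕ} (A : Mat n) (e : En n) :
    dotProduct (e : Fin n → ℝ) (Matrix.mulVec A (e : Fin n → ℝ)) ≤ opNorm A * ‖e‖ ^ 2 := by
  rw [← Matrix.inner_toEuclideanCLM]
  refine (real_inner_le_norm _ _).trans ?_
  have := (Matrix.toEuclideanCLM (𝕜 := ℝ) A).le_opNorm e
  unfold opNorm
  have h := mul_le_mul_of_nonneg_left this (norm_nonneg e)
  linarith

theorem opNorm_scalar {n : ℕ} {c : ℝ} (hc : 0 ≤ c) : opNorm (c • (1 : Mat n)) ≤ c := by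
  refine ContinuousLinearMap.opNorm_le_bound _ hc fun v => ?_
  rw [map_smul, map_one]
  change ‖c • v‖ ≤ _
  rw [norm_smul, Real.norm_eq_abs, abs_of_nonneg hc]

theorem jensenSym {n : ℕ} {F : Mat n → ℝ} (hF : ConcaveOnSym F) :
    ConcaveOn ℝ {M : Mat n | M.IsSymm} F := by
  refine ⟨?_, ?_⟩
  · intro M hM N hN a b _ _ _
    exact (Matrix.IsSymm.smul hM a).add (Matrix.IsSymm.smul hN b)
  · intro M hM N hN a b ha hb hab
    have hb' : b = 1 - a := by linarith
    subst hb'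
    exact hF M N hM hN a ⟨ha, by linarith⟩

theorem conc_matrix {n : ℕ} {lam Lam : ℝ} (hlam : 0 < lam) {F : Mat n → ℝ} (hF : ConcaveOnSym F)
    (hE : UnifEllipticOperator lam Lam F) {ι : Type*} (s : Finset ι) (hs : s.Nonempty)
    (P : ι → Mat n) (M : Mat n) (hP : ∀ i ∈ s, (P i).IsSymm ∧ F (P i) = 0) (hM : M.IsSymm)
    (hFM : F M = 0) {c : ℝ} (hc : 0 ≤ c)
    (h : ∀ e : En n, ∑ i ∈ s, (dotProduct (e : Fin n → ℝ) (Matrix.mulVec (P i) (e : Fin n → ℝ)) -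
      dotProduct (e : Fin n → ℝ) (Matrix.mulVec M (e : Fin n → ℝ))) ≤ c * ‖e‖ ^ 2) (hLam : 0 ≤ Lam)
    (e : En n) :
    -(Lam / lam * c) * ‖e‖ ^ 2 ≤
      ∑ i ∈ s, (dotProduct (e : Fin n → ℝ) (Matrix.mulVec (P i) (e : Fin n → ℝ)) -
      dotProduct (e : Fin n → ℝ) (Matrix.mulVec M (e : Fin n → ℝ))) := by
  obtain ⟨N, hN⟩ : ∃ N : ℝ, N = s.card := ⟨_, rfl⟩
  have hN0 : 0 < N := by rw [hN]; exact_mod_cast hs.card_pos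
  obtain ⟨A, hA⟩ : ∃ A : Mat n, A = ∑ i ∈ s, (1 / N) • P i := ⟨_, rfl⟩
  have hw1 : ∑ i ∈ s, (1 / N) = 1 := by
    rw [Finset.sum_const, nsmul_eq_mul, ← hN]; field_simp
  have hAF : 0 ≤ F A := by
    have := (jensenSym hF).le_map_sum (t := s) (w := fun _ => 1 / N) (p := P)
      (fun i _ => by positivity) hw1 (fun i hi => (hP i hi).1)
    rw [Finset.sum_eq_zero (fun i hi => by rw [(hP i hi).2, smul_zero]), ← hA] at this
    exact this
  have hAs : A.IsSymm := by
    have := (jensenSym hF).1.sum_mem (t := s) (w := fun _ => 1 / N) (z := P)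
      (fun i _ => by positivity) hw1 (fun i hi => (hP i hi).1)
    rw [← hA] at this
    exact this
  obtain ⟨Z, hZ⟩ : ∃ Z : Mat n, Z = (c / N) • (1 : Mat n) - (A - M) := ⟨_, rfl⟩
  have h1s : ((c / N) • (1 : Mat n)).IsSymm := Matrix.IsSymm.smul Matrix.isSymm_one _
  have hZs : Z.IsSymm := by rw [hZ]; exact h1s.sub (hAs.sub hM)
  have hqA : ∀ v : En n, dotProduct (v : Fin n → ℝ) (Matrix.mulVec A (v : Fin n → ℝ)) =
      1 / N * ∑ i ∈ s, dotProduct (v : Fin n → ℝ) (Matrix.mulVec (P i) (v : Fin n → ℝ)) := by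
    intro v
    rw [hA, Matrix.sum_mulVec, dotProduct_sum, Finset.mul_sum]
    refine Finset.sum_congr rfl fun i _ => ?_
    rw [Matrix.smul_mulVec, dotProduct_smul, smul_eq_mul]
  have hq1 : ∀ v : En n, dotProduct (v : Fin n → ℝ) (v : Fin n → ℝ) = ‖v‖ ^ 2 := by
    intro v
    rw [EuclideanSpace.real_norm_sq_eq]
    exact Finset.sum_congr rfl fun i _ => by ring
  have hqZ : ∀ v : En n, dotProduct (v : Fin n → ℝ) (Matrix.mulVec Z (v : Fin n → ℝ)) =
      1 / N * (c * ‖v‖ ^ 2 - ∑ i ∈ s, (dotProduct (v : Fin n → ℝ) (Matrix.mulVec (P i) (v : Fin n → ℝ)) -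
      dotProduct (v : Fin n → ℝ) (Matrix.mulVec M (v : Fin n → ℝ)))) := by
    intro v
    rw [hZ, Matrix.sub_mulVec, Matrix.sub_mulVec, dotProduct_sub, dotProduct_sub, hqA,
      Matrix.smul_mulVec, Matrix.one_mulVec, dotProduct_smul, hq1, smul_eq_mul,
      Finset.sum_sub_distrib, Finset.sum_const, nsmul_eq_mul, ← hN]
    field_simp
  have hZp : Z.PosSemidef := by
    refine .of_dotProduct_mulVec_nonneg ?_ fun v => ?_
    · rw [Matrix.IsHermitian, Matrix.conjTranspose_eq_transpose_of_trivial]; exact hZs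
    · rw [star_trivial]
      have := hqZ (WithLp.toLp 2 v)
      change dotProduct v (Matrix.mulVec Z v) = _ at this
      rw [this]
      have := h (WithLp.toLp 2 v)
      have h3 : 0 < 1 / N := by positivity
      apply mul_nonneg h3.le
      linarith
  have h1p : ((c / N) • (1 : Mat n)).PosSemidef := Matrix.PosSemidef.one.smul (by positivity)
  have E1 := (hE A Z hAs hZs hZp).1
  have E2 := (hE M ((c / N) • (1 : Mat n)) hM h1s h1p).2
  have e1 : A + Z = M + (c / N) • (1 : Mat n) := by rw [hZ]; abel
  rw [e1] at E1
  have E3 : Lam * opNorm ((c / N) • (1 : Mat n)) ≤ Lam * (c / N) :=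
    mul_le_mul_of_nonneg_left (opNorm_scalar (by positivity)) hLam
  have E4 : lam * opNorm Z ≤ Lam * (c / N) := by linarith
  have E5 : opNorm Z ≤ Lam / lam * c * (1 / N) := by
    rw [← mul_le_mul_iff_right₀ hlam]
    refine E4.trans (le_of_eq ?_)
    field_simp
  have E6 := qf_le_opNorm Z e
  rw [hqZ] at E6
  have E7 := E6.trans (mul_le_mul_of_nonneg_right E5 (sq_nonneg ‖e‖))
  have h3 : 0 < 1 / N := by positivity
  have E8 : c * ‖e‖ ^ 2 - ∑ i ∈ s, (dotProduct (e : Fin n → ℝ) (Matrix.mulVec (P i) (e : Fin n → ℝ)) -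
      dotProduct (e : Fin n → ℝ) (Matrix.mulVec M (e : Fin n → ℝ))) ≤ Lam / lam * c * ‖e‖ ^ 2 := by
    refine le_of_mul_le_mul_left ?_ h3
    linarith
  have : 0 ≤ c * ‖e‖ ^ 2 := by positivity
  linarith

theorem hessian_eq_mx {n : ℕ} {u : En n → ℝ} {x : En n} (hd : DifferentiableAt ℝ (fderiv ℝ u) x) :
    hessian u x = mx (D2 u x) := by
  ext i j
  change fderiv ℝ (fun y => fderiv ℝ u y (EuclideanSpace.single i 1)) x (EuclideanSpace.single j 1) =
    D2 u x (EuclideanSpace.single j 1) (EuclideanSpace.single i 1)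
  have h1 : HasFDerivAt (fun z => fderiv ℝ u z (EuclideanSpace.single i 1))
      ((ContinuousLinearMap.apply ℝ ℝ (EuclideanSpace.single i (1 : ℝ))).comp (D2 u x)) x :=
    (ContinuousLinearMap.apply ℝ ℝ (EuclideanSpace.single i (1 : ℝ))).hasFDerivAt.comp x hd.hasFDerivAt
  rw [h1.fderiv]
  rfl

theorem mx_sub {n : ℕ} (X Y : En n →L[ℝ] En n →L[ℝ] ℝ) : mx X - mx Y = mx (X - Y) := by
  ext i j
  simp [mx]

theorem build_EK {n : ℕ} {lam Lam : ℝ} (hlam : 0 < lam) (hLam : lam ≤ Lam) {F : Mat n → ℝ}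
    (hF : ConcaveOnSym F) (hE : UnifEllipticOperator lam Lam F) {u : En n → ℝ} {L : ℝ≥0}
    (hu : ContDiffOn ℝ 1 u (ball (0 : En n) 1))
    (hL : LipschitzOnWith L (fun x => fderiv ℝ u x) (ball (0 : En n) 1))
    (hae : ∀ᵐ x ∂(volume.restrict (ball (0 : En n) 1)),
      DifferentiableAt ℝ (fun y => fderiv ℝ u y) x ∧ F (hessian u x) = 0) :
    EKData (Lam / lam) u {x | x ∈ ball (0 : En n) 1 ∧ DifferentiableAt ℝ (fderiv ℝ u) x ∧
      F (hessian u x) = 0} := by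
  have hdiff : ∀ y ∈ ball (0 : En n) 1, DifferentiableAt ℝ u y := fun y hy =>
    (hu.differentiableOn one_ne_zero).differentiableAt (isOpen_ball.mem_nhds hy)
  have hq : ∀ x, x ∈ ball (0 : En n) 1 ∧ DifferentiableAt ℝ (fderiv ℝ u) x ∧ F (hessian u x) = 0 →
      ∀ e : En n, D2 u x e e =
        dotProduct (e : Fin n → ℝ) (Matrix.mulVec (hessian u x) (e : Fin n → ℝ)) := by
    intro x hx e
    rw [hessian_eq_mx hx.2.1, mx_apply]
  have hsymm : ∀ x, x ∈ ball (0 : En n) 1 ∧ DifferentiableAt ℝ (fderiv ℝ u) x ∧ F (hessian u x) = 0 →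
      (hessian u x).IsSymm := by
    intro x hx
    rw [hessian_eq_mx hx.2.1]
    ext i j
    have hev : ∀ᶠ y in 𝓝 x, DifferentiableAt ℝ u y := by
      filter_upwards [isOpen_ball.mem_nhds hx.1] with y hy using hdiff y hy
    exact D2_symm hev hx.2.1 _ _
  refine ⟨hdiff, ⟨L, hL⟩, fun x hx => hx.1, ?_, fun x hx => hx.2.1, ?_⟩
  · rw [ae_restrict_iff' measurableSet_ball] at hae
    filter_upwards [hae] with x hx hxb using ⟨hxb, (hx hxb).1, (hx hxb).2⟩
  · intro s p x hp hx c hc hle e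
    have key : ∀ e : En n, (∑ i ∈ s, (D2 u (p i) - D2 u x)) e e =
        ∑ i ∈ s, (dotProduct (e : Fin n → ℝ) (Matrix.mulVec (hessian u (p i)) (e : Fin n → ℝ)) -
          dotProduct (e : Fin n → ℝ) (Matrix.mulVec (hessian u x) (e : Fin n → ℝ))) := by
      intro e
      rw [sum_apply, sum_apply]
      refine Finset.sum_congr rfl fun i hi => ?_
      rw [← hq x hx, ← hq (p i) (hp i hi)]
      rfl
    rcases s.eq_empty_or_nonempty with rfl | hs
    · rw [key, Finset.sum_empty]
      have h1 : 0 ≤ Lam / lam * c := by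
        have : 0 ≤ Lam := by linarith
        positivity
      nlinarith [sq_nonneg ‖e‖]
    · rw [key]
      refine conc_matrix hlam hF hE s hs _ _ (fun i hi => ⟨hsymm _ (hp i hi), (hp i hi).2.2⟩)
        (hsymm x hx) hx.2.2 hc (fun v => ?_) (by linarith) e
      rw [← key]
      exact hle v

/-- **Evans–Krylov theorem (1982).** Let `F` be concave and uniformly elliptic with `F(0)=0`.
There are `α ∈ (0,1)` and `C > 0` depending only on `n, λ, Λ` such that any `C^{1,1}(B₁)`
solution of `F(D²u) = 0` a.e. in `B₁` has an `α`-Hölder continuous Hessian representative on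
`B_{1/2}`, with all the interior norms controlled by `C ‖u‖_{L^∞(B₁)}`. -/
theorem evans_krylov
    (n : ℕ) (hn : 2 ≤ n) (lam Lam : ℝ) (hlam : 0 < lam) (hLam : lam ≤ Lam) :
    ∃ α C : ℝ, α ∈ Set.Ioo (0 : ℝ) 1 ∧ 0 < C ∧
      ∀ (F : Mat n → ℝ), ConcaveOnSym F → F 0 = 0 → UnifEllipticOperator lam Lam F →
      ∀ (u : En n → ℝ) (L : ℝ≥0),
        ContDiffOn ℝ 1 u (ball (0 : En n) 1) →
        LipschitzOnWith L (fun x => fderiv ℝ u x) (ball (0 : En n) 1) →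
        (∀ᵐ x ∂(volume.restrict (ball (0 : En n) 1)),
          DifferentiableAt ℝ (fun y => fderiv ℝ u y) x ∧ F (hessian u x) = 0) →
        ∀ K : ℝ, (∀ x ∈ ball (0 : En n) 1, |u x| ≤ K) →
        ∃ H : En n → Mat n,
          (∀ᵐ x ∂(volume.restrict (ball (0 : En n) (1 / 2))), H x = hessian u x) ∧
          (∀ x ∈ ball (0 : En n) (1 / 2),
            |u x| ≤ C * K ∧ ‖fderiv ℝ u x‖ ≤ C * K ∧ opNorm (H x) ≤ C * K) ∧
          (∀ x ∈ ball (0 : En n) (1 / 2), ∀ y ∈ ball (0 : En n) (1 / 2), x ≠ y →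
            opNorm (H x - H y) ≤ C * K * ‖x - y‖ ^ α) := by
  have hn1 : 1 ≤ n := by omega
  have hK : 1 ≤ Lam / lam := by rw [le_div_iff₀ hlam]; linarith
  obtain ⟨α, C, hα0, hα1, hC, H⟩ := ek_main hn1 hK
  refine ⟨α, C, ⟨hα0, hα1⟩, by linarith, ?_⟩
  intro F hF _ hE u L hu hL hae K0 hK0
  have D := build_EK hlam hLam hF hE hu hL hae
  obtain ⟨G, hG⟩ : ∃ G : Set (En n), G = {x | x ∈ ball (0 : En n) 1 ∧
    DifferentiableAt ℝ (fderiv ℝ u) x ∧ F (hessian u x) = 0} := ⟨_, rfl⟩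
  rw [← hG] at D
  obtain ⟨H1, H2, H3⟩ := H u G D K0 hK0
  have hKp : 0 ≤ K0 := (abs_nonneg _).trans (hK0 0 (by simp))
  obtain ⟨T, T1, T2, T3⟩ := holder_extend (f := fun x => D2 u x) (S := G ∩ ball 0 (1 / 2)) hα0
    (fun x hx => H2 x hx.1 hx.2) (fun x hx y hy => H3 x hx.1 hx.2 y hy.1 hy.2)
  have hsub : ball (0 : En n) (1 / 2) ⊆ ball 0 1 := ball_subset_ball (by norm_num)
  have hcl : ∀ x ∈ ball (0 : En n) (1 / 2), x ∈ closure (G ∩ ball 0 (1 / 2)) := by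
    intro x hx
    have hd : Dense {z : En n | z ∈ ball (0 : En n) 1 → z ∈ G} := Measure.dense_of_ae D.ae
    have := hd.open_subset_closure_inter isOpen_ball hx
    refine closure_mono ?_ this
    rintro z ⟨hz1, hz2⟩
    exact ⟨hz2 (hsub hz1), hz1⟩
  refine ⟨fun x => mx (T x), ?_, ?_, ?_⟩
  · rw [ae_restrict_iff' measurableSet_ball]
    filter_upwards [D.ae] with x hx hxb
    have hxG := hx (hsub hxb)
    rw [T1 x ⟨hxG, hxb⟩, hessian_eq_mx (D.d2 x hxG)]
  · intro x hx
    refine ⟨?_, H1 x hx, (opNorm_mx _).trans (T2 x (hcl x hx))⟩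
    have := hK0 x (hsub hx)
    nlinarith
  · intro x hx y hy _
    change opNorm (mx (T x) - mx (T y)) ≤ _
    rw [mx_sub]
    exact (opNorm_mx _).trans (T3 x (hcl x hx) y (hcl y hy))
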